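/- Let K be a Hilbert space, let K₀ : K → L²(ℝⁿ) be a bounded everywhere defined operator with ran K₀ ⊂ H^{3/2}(ℝⁿ), and let α ∈ L^∞(ℝⁿ) ∩ L^p(ℝⁿ) with p ≥ 2 and p > 2n/3. Then α K₀ belongs to the Schatten–von Neumann class S_p. -/

import Mathlib

open MeasureTheory Filter Topology

noncomputable section

namespace RobinHS

/-- The boundary `ℝⁿ`, modelled as Euclidean space. -/
abbrev Bdy (n : ℕ) := EuclideanSpace ℝ (Fin n)

/-- The ambient space `ℝⁿ × ℝ ≅ ℝ^{n+1}`. -/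
abbrev Amb (n : ℕ) := Bdy n × ℝ

/-- The open upper half-space `ℝ^{n+1}_+`. -/
def half (n : ℕ) : Set (Amb n) := {x | 0 < x.2}

/-- Lebesgue measure restricted to the half-space. -/
abbrev μplus (n : ℕ) : Measure (Amb n) := volume.restrict (half n)

/-- `L²(ℝ^{n+1}_+)`. -/
abbrev Hplus (n : ℕ) := Lp ℂ 2 (μplus n)

/-- `L²(ℝⁿ)`. -/
abbrev Hbd (n : ℕ) := Lp ℂ 2 (volume : Measure (Bdy n))

/-- The coordinate directions of `ℝ^{n+1}`. -/
def dirs (n : ℕ) (i : Fin (n + 1)) : Amb n :=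
  if h : (i : ℕ) < n then (EuclideanSpace.single ⟨i, h⟩ (1 : ℝ), 0) else (0, 1)

/-- Real-valued test functions compactly supported in `U`. -/
def IsTest (n : ℕ) (U : Set (Amb n)) (φ : Amb n → ℝ) : Prop :=
  ContDiff ℝ (⊤ : ℕ∞) φ ∧ HasCompactSupport φ ∧ tsupport φ ⊆ U

/-- Complex-valued test functions compactly supported in `U`. -/
def IsTestC (n : ℕ) (U : Set (Amb n)) (φ : Amb n → ℂ) : Prop :=
  ContDiff ℝ (⊤ : ℕ∞) φ ∧ HasCompactSupport φ ∧ tsupport φ ⊆ U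

/-- `g` is the weak (distributional) derivative of `f` in direction `v` on `U`. -/
def IsWeakDeriv (n : ℕ) (U : Set (Amb n)) (v : Amb n) (f g : Amb n → ℂ) : Prop :=
  ∀ φ : Amb n → ℝ, IsTest n U φ →
    ∫ x in U, f x * ((fderiv ℝ φ x) v : ℂ) = - ∫ x in U, g x * (φ x : ℂ)

def MemL2 (n : ℕ) (U : Set (Amb n)) (f : Amb n → ℂ) : Prop :=
  MemLp f 2 (volume.restrict U)

/-- The Sobolev space `H¹(U)`. -/
def MemH1 (n : ℕ) (U : Set (Amb n)) (f : Amb n → ℂ) : Prop :=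
  MemL2 n U f ∧ ∀ i : Fin (n + 1), ∃ g, IsWeakDeriv n U (dirs n i) f g ∧ MemL2 n U g

/-- The Sobolev space `H²(U)`. -/
def MemH2 (n : ℕ) (U : Set (Amb n)) (f : Amb n → ℂ) : Prop :=
  MemL2 n U f ∧ ∀ i : Fin (n + 1), ∃ g, IsWeakDeriv n U (dirs n i) f g ∧ MemL2 n U g ∧
    ∀ j : Fin (n + 1), ∃ h, IsWeakDeriv n U (dirs n j) g h ∧ MemL2 n U h

/-- Finiteness of the Gagliardo seminorm of order `1/2` on `U ⊆ ℝ^{n+1}`. -/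
def Gag12 (n : ℕ) (U : Set (Amb n)) (g : Amb n → ℂ) : Prop :=
  Integrable (fun p : Amb n × Amb n => ‖g p.1 - g p.2‖ ^ 2 / ‖p.1 - p.2‖ ^ ((n : ℝ) + 2))
    ((volume.restrict U).prod (volume.restrict U))

/-- The fractional Sobolev space `H^{3/2}(U)` (Sobolev–Slobodeckij description). -/
def MemH32 (n : ℕ) (U : Set (Amb n)) (f : Amb n → ℂ) : Prop :=
  MemL2 n U f ∧ ∀ i : Fin (n + 1), ∃ g, IsWeakDeriv n U (dirs n i) f g ∧ MemL2 n U g ∧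
    Gag12 n U g

/-- The classical Laplacian of a test function. -/
def lapl (n : ℕ) (φ : Amb n → ℝ) (x : Amb n) : ℝ :=
  ∑ i : Fin (n + 1), fderiv ℝ (fun y => fderiv ℝ φ y (dirs n i)) x (dirs n i)

/-- `g = -Δ f` in the weak (distributional) sense on `U`. -/
def IsNegLap (n : ℕ) (U : Set (Amb n)) (f g : Amb n → ℂ) : Prop :=
  ∀ φ : Amb n → ℝ, IsTest n U φ →
    ∫ x in U, f x * (lapl n φ x : ℂ) = - ∫ x in U, g x * (φ x : ℂ)

/-- `b` is the Dirichlet boundary trace `f|_{ℝⁿ}` of `f` (as an `L²(ℝⁿ)` limit). -/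
def HasDTrace (n : ℕ) (f : Amb n → ℂ) (b : Bdy n → ℂ) : Prop :=
  Tendsto (fun t : ℝ => ∫ y : Bdy n, ‖f (y, t) - b y‖ ^ 2) (𝓝[>] (0 : ℝ)) (𝓝 (0 : ℝ))

/-- `b = ∂_ν f|_{ℝⁿ}` is the trace of the normal derivative of `f`, the normal pointing
outwards of the half-space (i.e. downwards). -/
def HasNTrace (n : ℕ) (f : Amb n → ℂ) (b : Bdy n → ℂ) : Prop :=
  ∃ f', IsWeakDeriv n (half n) ((0 : Bdy n), (1 : ℝ)) f f' ∧ HasDTrace n f' (fun y => - b y)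

/-- The Sobolev space `H²₀(ℝ^{n+1}_+)`: `H²`-functions approximable in the `H²`-norm by
smooth functions compactly supported in the open half-space. -/
def MemH20 (n : ℕ) (f : Amb n → ℂ) : Prop :=
  MemH2 n (half n) f ∧
  ∀ ε : ℝ, 0 < ε → ∃ φ : Amb n → ℂ, IsTestC n (half n) φ ∧
    (∫ x in half n, ‖f x - φ x‖ ^ 2) < ε ∧
    (∀ i : Fin (n + 1), ∀ g, IsWeakDeriv n (half n) (dirs n i) f g →
      (∫ x in half n, ‖g x - (fderiv ℝ φ x) (dirs n i)‖ ^ 2) < ε) ∧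
    (∀ i j : Fin (n + 1), ∀ g h, IsWeakDeriv n (half n) (dirs n i) f g →
      IsWeakDeriv n (half n) (dirs n j) g h →
      (∫ x in half n, ‖h x - (fderiv ℝ (fun y => (fderiv ℝ φ y) (dirs n i)) x) (dirs n j)‖ ^ 2) < ε)

/-- Membership in the domain of the Robin Laplacian `A_α`:
`f ∈ H²(ℝ^{n+1}_+)` with `∂_ν f|_{ℝⁿ} = α f|_{ℝⁿ}`. -/
def RobinDom (n : ℕ) (α : Bdy n → ℂ) (f : Amb n → ℂ) : Prop :=
  MemH2 n (half n) f ∧ ∃ b : Bdy n → ℂ, HasDTrace n f b ∧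
    HasNTrace n f (fun y => α y * b y)

/-- The graph relation of the Robin Laplacian `A_α` in `L²(ℝ^{n+1}_+)`: `w = A_α u`. -/
def RobinRel (n : ℕ) (α : Bdy n → ℂ) (u w : Hplus n) : Prop :=
  ∃ f g : Amb n → ℂ, ⇑u =ᵐ[μplus n] f ∧ ⇑w =ᵐ[μplus n] g ∧
    RobinDom n α f ∧ IsNegLap n (half n) f g

/-- The graph relation of the Neumann Laplacian `A_N` in `L²(ℝ^{n+1}_+)`. -/
def NeuRel (n : ℕ) (u w : Hplus n) : Prop :=
  ∃ f g : Amb n → ℂ, ⇑u =ᵐ[μplus n] f ∧ ⇑w =ᵐ[μplus n] g ∧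
    MemH2 n (half n) f ∧ HasNTrace n f (fun _ => 0) ∧ IsNegLap n (half n) f g

/-- Membership in `H^{3/2}_Δ(ℝ^{n+1}_+) = {f ∈ H^{3/2} : Δf ∈ L²}`. -/
def TDom (n : ℕ) (f : Amb n → ℂ) : Prop :=
  MemH32 n (half n) f ∧ ∃ L, IsNegLap n (half n) f L ∧ MemL2 n (half n) L

/-- The graph relation of the operator `T = -Δ` on `H^{3/2}_Δ(ℝ^{n+1}_+)`. -/
def TRel (n : ℕ) (u w : Hplus n) : Prop :=
  ∃ f g : Amb n → ℂ, ⇑u =ᵐ[μplus n] f ∧ ⇑w =ᵐ[μplus n] g ∧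
    TDom n f ∧ IsNegLap n (half n) f g

/-- The graph relation of `T` restricted to `ker Γ₀` (vanishing Neumann trace). -/
def TNeuRel (n : ℕ) (u w : Hplus n) : Prop :=
  ∃ f g : Amb n → ℂ, ⇑u =ᵐ[μplus n] f ∧ ⇑w =ᵐ[μplus n] g ∧
    TDom n f ∧ HasNTrace n f (fun _ => 0) ∧ IsNegLap n (half n) f g

/-- The graph relation of the minimal operator `A = -Δ` on `H²₀(ℝ^{n+1}_+)`. -/
def MinRel (n : ℕ) (u w : Hplus n) : Prop :=
  ∃ f g : Amb n → ℂ, ⇑u =ᵐ[μplus n] f ∧ ⇑w =ᵐ[μplus n] g ∧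
    MemH20 n f ∧ IsNegLap n (half n) f g

/-- `f ∈ ker (T - λ)`. -/
def EigSol (n : ℕ) (lam : ℂ) (f : Amb n → ℂ) : Prop :=
  TDom n f ∧ IsNegLap n (half n) f (fun x => lam * f x)

/-- `α ∈ W^{1,∞}(ℝⁿ)`: bounded with bounded (weak) first-order derivatives,
equivalently bounded and Lipschitz. -/
def IsW1inf (n : ℕ) (α : Bdy n → ℂ) : Prop :=
  (∃ C : ℝ, ∀ x, ‖α x‖ ≤ C) ∧ ∃ L : NNReal, LipschitzWith L α

/-- `‖α‖_∞ = sup_x |α(x)|`. -/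
def supNorm (n : ℕ) (α : Bdy n → ℂ) : ℝ := ⨆ x, ‖α x‖

/-- `γ` is the Poisson operator `γ(λ)` (the `γ`-field): it maps the Neumann trace
`∂_ν f_λ|_{ℝⁿ}` of `f_λ ∈ ker(T - λ)` to `f_λ`. -/
def IsPoissonOp (n : ℕ) (lam : ℂ) (γ : Hbd n →L[ℂ] Hplus n) : Prop :=
  ∀ (Φ : Hbd n) (a : Bdy n → ℂ) (f : Amb n → ℂ),
    ⇑Φ =ᵐ[(volume : Measure (Bdy n))] a → EigSol n lam f → HasNTrace n f a →
      ⇑(γ Φ) =ᵐ[μplus n] f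

/-- `M` is the Neumann-to-Dirichlet map `M(λ)` (the Weyl function): it maps the Neumann
trace of `f_λ ∈ ker(T - λ)` to its Dirichlet trace. -/
def IsNDMap (n : ℕ) (lam : ℂ) (M : Hbd n →L[ℂ] Hbd n) : Prop :=
  ∀ (Φ : Hbd n) (a b : Bdy n → ℂ) (f : Amb n → ℂ),
    ⇑Φ =ᵐ[(volume : Measure (Bdy n))] a → EigSol n lam f → HasNTrace n f a →
      HasDTrace n f b → ⇑(M Φ) =ᵐ[(volume : Measure (Bdy n))] b

/-- `M` is the bounded multiplication operator by `α` in `L²(ℝⁿ)`. -/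
def IsMultOp (n : ℕ) (α : Bdy n → ℂ) (M : Hbd n →L[ℂ] Hbd n) : Prop :=
  ∀ u : Hbd n, ⇑(M u) =ᵐ[(volume : Measure (Bdy n))] fun y => α y * u y

/-! Sobolev spaces on the boundary `ℝⁿ`. -/

def bdirs (n : ℕ) (i : Fin n) : Bdy n := EuclideanSpace.single i (1 : ℝ)

def IsTestB (n : ℕ) (φ : Bdy n → ℝ) : Prop := ContDiff ℝ (⊤ : ℕ∞) φ ∧ HasCompactSupport φ

def IsWeakDerivB (n : ℕ) (v : Bdy n) (f g : Bdy n → ℂ) : Prop :=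
  ∀ φ : Bdy n → ℝ, IsTestB n φ →
    ∫ y, f y * ((fderiv ℝ φ y) v : ℂ) = - ∫ y, g y * (φ y : ℂ)

/-- Finiteness of the Gagliardo seminorm of order `1/2` on `ℝⁿ`. -/
def GagB (n : ℕ) (g : Bdy n → ℂ) : Prop :=
  Integrable (fun p : Bdy n × Bdy n => ‖g p.1 - g p.2‖ ^ 2 / ‖p.1 - p.2‖ ^ ((n : ℝ) + 1))
    ((volume : Measure (Bdy n)).prod (volume : Measure (Bdy n)))

/-- The fractional Sobolev space `H^{3/2}(ℝⁿ)`. -/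
def MemH32B (n : ℕ) (f : Bdy n → ℂ) : Prop :=
  MemLp f 2 (volume : Measure (Bdy n)) ∧
  ∀ i : Fin n, ∃ g, IsWeakDerivB n (bdirs n i) f g ∧
    MemLp g 2 (volume : Measure (Bdy n)) ∧ GagB n g

/-! Abstract notions for (graph relations of) unbounded operators in Hilbert spaces,
Schatten–von Neumann classes, groups, spectra. -/

section Abstract

variable {H G : Type*} [NormedAddCommGroup H] [InnerProductSpace ℂ H] [CompleteSpace H]
  [NormedAddCommGroup G] [InnerProductSpace ℂ G] [CompleteSpace G]

/-- `R` is the (bounded, everywhere defined, two-sided) resolvent of the operator with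
graph relation `Rel` at the point `lam`. -/
def RelResolventAt (Rel : H → H → Prop) (lam : ℂ) (R : H →L[ℂ] H) : Prop :=
  (∀ u : H, Rel (R u) (u + lam • R u)) ∧
  (∀ u w : H, Rel u w → R (w - lam • u) = u)

/-- `lam` belongs to the resolvent set of the operator with graph relation `Rel`. -/
def RelInResolvent (Rel : H → H → Prop) (lam : ℂ) : Prop :=
  ∃ R : H →L[ℂ] H, RelResolventAt Rel lam R

/-- The graph relation of the adjoint operator. -/
def AdjRel (Rel : H → H → Prop) (u w : H) : Prop :=
  ∀ f g : H, Rel f g → (inner ℂ g u : ℂ) = (inner ℂ f w : ℂ)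

/-- Symmetry of the operator with graph relation `Rel`. -/
def IsSymmRel (Rel : H → H → Prop) : Prop :=
  ∀ u w f g : H, Rel u w → Rel f g → (inner ℂ w f : ℂ) = (inner ℂ u g : ℂ)

/-- Selfadjointness of the operator with graph relation `Rel`. -/
def IsSelfAdjRel (Rel : H → H → Prop) : Prop :=
  ∀ u w : H, Rel u w ↔ AdjRel Rel u w

/-- The operator with graph relation `Rel`, shifted by `lam`, is semi-Fredholm:
closed range, and finite-dimensional kernel or finite-codimensional range. -/
def SemiFredholmAt (Rel : H → H → Prop) (lam : ℂ) : Prop :=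
  IsClosed {v : H | ∃ u w, Rel u w ∧ v = w - lam • u} ∧
  ((∃ t : Finset H, {u : H | Rel u (lam • u)} ⊆ (Submodule.span ℂ (t : Set H) : Set H)) ∨
   (∃ t : Finset H,
      Submodule.span ℂ ((t : Set H) ∪ {v : H | ∃ u w, Rel u w ∧ v = w - lam • u}) = ⊤))

/-- The essential spectrum: points where the operator is not semi-Fredholm. -/
def EssSpec (Rel : H → H → Prop) : Set ℂ := {lam | ¬ SemiFredholmAt Rel lam}

/-- The `k`-th approximation number (`= (k+1)`-th singular value) of a bounded operator
between Hilbert spaces: the distance to operators of rank at most `k`. -/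
def sNum (T : H →L[ℂ] G) (k : ℕ) : ℝ :=
  ⨅ F : {F : H →L[ℂ] G // LinearMap.rank F.toLinearMap ≤ (k : Cardinal)}, ‖T - (F : H →L[ℂ] G)‖

/-- Membership in the Schatten–von Neumann ideal `S_p`: the singular values are
`p`-summable. -/
def MemSchatten (p : ℝ) (T : H →L[ℂ] G) : Prop :=
  IsCompactOperator ⇑T ∧ Summable (fun k : ℕ => sNum T k ^ p)

/-- Membership in the weak Schatten–von Neumann ideal `S_{p,∞}`:
`s_k(T) = O(k^{-1/p})`. -/
def MemWeakSchatten (p : ℝ) (T : H →L[ℂ] G) : Prop :=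
  IsCompactOperator ⇑T ∧ ∃ C : ℝ, ∀ k : ℕ, sNum T k ≤ C * ((k : ℝ) + 1) ^ (-(1 / p))

/-- `U` is the strongly continuous unitary group `t ↦ e^{-itA}` generated by the
selfadjoint operator `A` with graph relation `Rel`. -/
def IsUnitaryGroupFor (Rel : H → H → Prop) (U : ℝ → (H →L[ℂ] H)) : Prop :=
  U 0 = 1 ∧ (∀ s t : ℝ, U (s + t) = (U s).comp (U t)) ∧
  (∀ (t : ℝ) (f : H), ‖U t f‖ = ‖f‖) ∧
  (∀ f : H, Continuous fun t : ℝ => U t f) ∧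
  (∀ u w : H, Rel u w → ∀ t : ℝ, HasDerivAt (fun s : ℝ => U s u) ((-Complex.I) • (U t w)) t)

/-- `f` belongs to the absolutely continuous subspace of the selfadjoint operator
generating the unitary group `U`: its spectral measure `μ_f`, whose Fourier–Stieltjes
transform is `t ↦ ⟪f, U(t) f⟫`, has an integrable density w.r.t. Lebesgue measure. -/
def InAc (U : ℝ → (H →L[ℂ] H)) (f : H) : Prop :=
  ∃ h : ℝ → ℝ, Integrable h ∧ (∀ x, 0 ≤ h x) ∧
    ∀ t : ℝ, (inner ℂ f (U t f) : ℂ) = ∫ x : ℝ, Complex.exp ((-Complex.I) * t * x) * (h x : ℂ)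

/-- `lam` is in the resolvent set of the absolutely continuous part (the restriction to
the absolutely continuous subspace) of the operator with graph relation `Rel`. -/
def AcResolventAt (Rel : H → H → Prop) (U : ℝ → (H →L[ℂ] H)) (lam : ℂ) : Prop :=
  ∃ R : H →L[ℂ] H,
    (∀ f : H, InAc U f → InAc U (R f) ∧ Rel (R f) (f + lam • R f)) ∧
    (∀ u w : H, Rel u w → InAc U u → R (w - lam • u) = u)

/-- `W` is a complete wave operator for the pair of unitary groups `U₁`, `U₂` along the
filter `l` (`atTop` for `W₊`, `atBot` for `W₋`): the strong limits
`lim U₂(t)* U₁(t) f` exist on the absolutely continuous subspace of the first operator,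
`W` is isometric there, and its range is the absolutely continuous subspace of the
second operator. -/
def WaveProps (U₁ U₂ : ℝ → (H →L[ℂ] H)) (l : Filter ℝ) (W : H →L[ℂ] H) : Prop :=
  (∀ f : H, InAc U₁ f → Tendsto (fun t : ℝ => U₂ (-t) (U₁ t f)) l (𝓝 (W f))) ∧
  (∀ f : H, InAc U₁ f → ‖W f‖ = ‖f‖ ∧ InAc U₂ (W f)) ∧
  (∀ g : H, InAc U₂ g → ∃ f : H, InAc U₁ f ∧ W f = g)

/-- `V` implements a unitary equivalence between the absolutely continuous parts of the
operators generating `U₁` and `U₂`. -/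
def AcUnitEquiv (U₁ U₂ : ℝ → (H →L[ℂ] H)) (V : H →L[ℂ] H) : Prop :=
  (∀ f : H, InAc U₁ f → ‖V f‖ = ‖f‖ ∧ InAc U₂ (V f)) ∧
  (∀ g : H, InAc U₂ g → ∃ f : H, InAc U₁ f ∧ V f = g) ∧
  (∀ (t : ℝ) (f : H), InAc U₁ f → V (U₁ t f) = U₂ t (V f))

/-- The spectrum of the operator with graph relation `Rel`. -/
def SpecOf (Rel : H → H → Prop) : Set ℂ := {lam | ¬ RelInResolvent Rel lam}

/-- `u` is a generalized eigenvector (root vector) at `lam`: `(A - lam)^k u = 0`. -/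
def RootVec (Rel : H → H → Prop) (lam : ℂ) (u : H) : Prop :=
  ∃ (k : ℕ) (c : ℕ → H), c 0 = u ∧ c k = 0 ∧
    ∀ j, j < k → ∃ w, Rel (c j) w ∧ c (j + 1) = w - lam • c j

/-- The algebraic multiplicity of `lam`: the dimension of the space of root vectors,
expressed as the least cardinality of a finite spanning set. -/
def AlgMult (Rel : H → H → Prop) (lam : ℂ) : ℕ :=
  sInf {k : ℕ | ∃ t : Finset H, t.card = k ∧
    {u : H | RootVec Rel lam u} ⊆ (Submodule.span ℂ (t : Set H) : Set H)}

/-- The discrete spectrum: isolated eigenvalues of finite algebraic multiplicity. -/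
def DiscSpec (Rel : H → H → Prop) : Set ℂ :=
  {lam | lam ∈ SpecOf Rel ∧
    (∃ ε : ℝ, 0 < ε ∧ ∀ z ∈ SpecOf Rel, dist z lam < ε → z = lam) ∧
    (∃ u : H, u ≠ 0 ∧ Rel u (lam • u)) ∧
    ∃ t : Finset H, {u : H | RootVec Rel lam u} ⊆ (Submodule.span ℂ (t : Set H) : Set H)}

end Abstract

end RobinHS

namespace RobinHS

/-!
Let `A h` be the average over the ball of radius `h`. For `f ∈ H^{3/2}(ℝⁿ)` the first-order Taylor
term is odd in the translation vector, so it disappears from `A h f - f`, and the Gagliardo seminorm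
of `∇f` bounds the remainder by `C h ^ (3 / 2)`. By Banach–Steinhaus the bound
`‖A h K₀ - K₀‖ ≤ C h ^ (3 / 2)` then holds in operator norm.

The averages have a kernel that is bounded in `L²`, with square norm `1 / |ball 0 h|`. Bessel's and
Hölder's inequalities hence bound the Schatten `p`-norm of `α A h S` by
`C ‖α‖_p h ^ (-n / p) ‖S‖` for every bounded `S`. Along `h = 2 ^ (-k)` the increments of
`α A h A h K₀`, which converges to `α K₀`, have Schatten norms of order `2 ^ (k (n / p - 3 / 2))`,
and these are summable as `n / p < 3 / 2`.
-/

open scoped ENNReal NNReal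

section SingularNumbers

variable {H G : Type*} [NormedAddCommGroup H] [InnerProductSpace ℂ H]
  [NormedAddCommGroup G] [InnerProductSpace ℂ G]

lemma sNum_nonneg (T : H →L[ℂ] G) (k : ℕ) : 0 ≤ sNum T k :=
  Real.iInf_nonneg fun _ => norm_nonneg _

lemma sNum_le_norm_sub (T : H →L[ℂ] G) {F : H →L[ℂ] G} {k : ℕ}
    (hF : LinearMap.rank F.toLinearMap ≤ k) : sNum T k ≤ ‖T - F‖ :=
  ciInf_le ⟨0, by rintro _ ⟨F, rfl⟩; exact norm_nonneg _⟩
    (⟨F, hF⟩ : {F : H →L[ℂ] G // LinearMap.rank F.toLinearMap ≤ (k : Cardinal)})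

lemma exists_norm_sub_lt_of_sNum_lt {T : H →L[ℂ] G} {k : ℕ} {r : ℝ} (h : sNum T k < r) :
    ∃ F : H →L[ℂ] G, LinearMap.rank F.toLinearMap ≤ k ∧ ‖T - F‖ < r := by
  have : Nonempty {F : H →L[ℂ] G // LinearMap.rank F.toLinearMap ≤ (k : Cardinal)} :=
    ⟨⟨0, by simp [LinearMap.rank_zero]⟩⟩
  obtain ⟨⟨F, hF⟩, hlt⟩ := exists_lt_of_ciInf_lt h
  exact ⟨F, hF, hlt⟩

lemma sNum_antitone (T : H →L[ℂ] G) : Antitone (sNum T) := by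
  intro k l hkl
  by_contra! hlt
  obtain ⟨F, hF, hTF⟩ := exists_norm_sub_lt_of_sNum_lt hlt
  exact hTF.not_ge (sNum_le_norm_sub T (hF.trans (by exact_mod_cast hkl)))

lemma sNum_le_norm_sub_comp_starProjection (T : H →L[ℂ] G) {m : ℕ} {V : Submodule ℂ H}
    [V.HasOrthogonalProjection] (hV : Module.rank ℂ V ≤ m) :
    sNum T m ≤ ‖T - T ∘L V.starProjection‖ := by
  refine sNum_le_norm_sub T ?_
  have hrange : (T ∘L V.starProjection).toLinearMap.range ≤ V.map T.toLinearMap := by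
    rintro _ ⟨x, rfl⟩
    exact ⟨V.starProjection x, V.starProjection_apply_mem x, rfl⟩
  have hmap : Module.rank ℂ (V.map T.toLinearMap) ≤ m := by
    simpa using (lift_rank_map_le T.toLinearMap V).trans (Cardinal.lift_le.2 hV)
  exact (Submodule.rank_mono hrange).trans hmap

lemma exists_unit_mem_orthogonal_sNum_le {T : H →L[ℂ] G} {m : ℕ} (hpos : 0 < sNum T m)
    {V : Submodule ℂ H} [V.HasOrthogonalProjection] (hV : Module.rank ℂ V ≤ m) :
    ∃ x ∈ Vᗮ, ‖x‖ = 1 ∧ sNum T m ≤ 2 * ‖T x‖ := by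
  obtain ⟨x, hx⟩ : ∃ x, sNum T m / 2 * ‖x‖ < ‖(T - T ∘L V.starProjection) x‖ := by
    by_contra! hcon
    linarith [sNum_le_norm_sub_comp_starProjection T hV,
      ContinuousLinearMap.opNorm_le_bound _ (half_pos hpos).le hcon]
  set y := x - V.starProjection x with hy_def
  have hyV : y ∈ Vᗮ := V.sub_starProjection_mem_orthogonal x
  have hyx : ‖y‖ ≤ ‖x‖ := by
    rw [hy_def, ← Submodule.starProjection_orthogonal_val]
    exact Submodule.norm_starProjection_apply_le _ x
  have hlt : sNum T m / 2 * ‖y‖ < ‖T y‖ := by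
    rw [map_sub]
    exact lt_of_le_of_lt (by gcongr) hx
  have hy : y ≠ 0 := by
    rintro h
    simp [h] at hlt
  refine ⟨(‖y‖⁻¹ : ℂ) • y, Submodule.smul_mem _ _ hyV, norm_smul_inv_norm hy, ?_⟩
  have hle : sNum T m / 2 ≤ ‖T y‖ / ‖y‖ := (le_div_iff₀ (norm_pos_iff.2 hy)).2 hlt.le
  rw [map_smul, norm_smul, norm_inv, Complex.norm_real, norm_norm, ← div_eq_inv_mul]
  linarith

lemma orthonormal_snoc {m : ℕ} {e : Fin m → H} (he : Orthonormal ℂ e) {x : H} (hx : ‖x‖ = 1)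
    (hex : ∀ i, inner ℂ (e i) x = 0) : Orthonormal ℂ (Fin.snoc (α := fun _ => H) e x) := by
  constructor
  · intro i
    induction i using Fin.lastCases with
    | last => simpa using hx
    | cast i => simpa using he.1 i
  · intro i j hij
    induction i using Fin.lastCases with
    | last =>
      induction j using Fin.lastCases with
      | last => exact absurd rfl hij
      | cast j => simpa using inner_eq_zero_symm.1 (hex j)
    | cast i =>
      induction j using Fin.lastCases with
      | last => simpa using hex i
      | cast j => simpa using he.2 (fun h => hij (by rw [h]))

lemma exists_orthonormal_sNum_le {T : H →L[ℂ] G} (hpos : ∀ m, 0 < sNum T m) (m : ℕ) :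
    ∃ e : Fin m → H, Orthonormal ℂ e ∧ ∀ i : Fin m, sNum T i ≤ 2 * ‖T (e i)‖ := by
  induction m with
  | zero => exact ⟨Fin.elim0, ⟨fun i => i.elim0, fun i => i.elim0⟩, fun i => i.elim0⟩
  | succ m ih =>
    obtain ⟨e, he, hT⟩ := ih
    have : FiniteDimensional ℂ (Submodule.span ℂ (Set.range e)) :=
      FiniteDimensional.span_of_finite ℂ (Set.finite_range e)
    obtain ⟨x, hxe, hx, hTx⟩ := exists_unit_mem_orthogonal_sNum_le (hpos m)
      ((rank_span_le (Set.range e)).trans (by simpa using Cardinal.mk_range_le_lift (f := e)))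
    refine ⟨Fin.snoc (α := fun _ => H) e x, orthonormal_snoc he hx fun i =>
      (Submodule.mem_orthogonal _ x).1 hxe _ (Submodule.subset_span ⟨i, rfl⟩), fun i => ?_⟩
    induction i using Fin.lastCases with
    | last => simpa using hTx
    | cast i => simpa using hT i

lemma isCompactOperator_of_tendsto_sNum [CompleteSpace G] {T : H →L[ℂ] G}
    (h : Tendsto (sNum T) atTop (𝓝 0)) : IsCompactOperator T := by
  have hlt (k : ℕ) : sNum T k < sNum T k + 1 / ((k : ℝ) + 1) :=
    lt_add_of_pos_right _ Nat.one_div_pos_of_nat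
  choose F hrank hF using fun k => exists_norm_sub_lt_of_sNum_lt (hlt k)
  refine isCompactOperator_of_tendsto (F := F) (l := atTop) ?_ (Eventually.of_forall fun k => ?_)
  · rw [tendsto_iff_norm_sub_tendsto_zero]
    refine squeeze_zero (fun _ => norm_nonneg _) (fun k => ?_)
      (by simpa only [add_zero] using h.add (tendsto_one_div_add_atTop_nhds_zero_nat (𝕜 := ℝ)))
    rw [norm_sub_rev]
    exact (hF k).le
  · have : FiniteDimensional ℂ (F k).toLinearMap.range :=
      Module.rank_lt_aleph0_iff.1 ((hrank k).trans_lt Cardinal.natCast_lt_aleph0)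
    have := FiniteDimensional.proper ℂ (F k).toLinearMap.range
    exact (isCompactOperator_of_locallyCompactSpace_dom (F k).rangeRestrict).clm_comp
      (F k).toLinearMap.range.subtypeL

lemma memSchatten_of_summable [CompleteSpace G] {T : H →L[ℂ] G} {p : ℝ} (hp : 0 < p)
    (h : Summable fun k => sNum T k ^ p) : MemSchatten p T := by
  refine ⟨isCompactOperator_of_tendsto_sNum ?_, h⟩
  have hpow := h.tendsto_atTop_zero.rpow_const (p := p⁻¹) (Or.inr (inv_nonneg.2 hp.le))
  rw [Real.zero_rpow (inv_ne_zero hp.ne')] at hpow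
  exact hpow.congr fun k => Real.rpow_rpow_inv (sNum_nonneg T k) hp.ne'

lemma summable_sNum_rpow_of_sum_le {T : H →L[ℂ] G} {p C : ℝ} (hp : 0 < p)
    (h : ∀ (m : ℕ) (e : Fin m → H), Orthonormal ℂ e → ∑ i, ‖T (e i)‖ ^ p ≤ C) :
    Summable fun k => sNum T k ^ p := by
  by_cases hpos : ∀ m, 0 < sNum T m
  · refine summable_of_sum_range_le (c := 2 ^ p * C)
      (fun k => Real.rpow_nonneg (sNum_nonneg T k) _) fun m => ?_
    obtain ⟨e, he, hT⟩ := exists_orthonormal_sNum_le hpos m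
    calc ∑ k ∈ Finset.range m, sNum T k ^ p = ∑ i : Fin m, sNum T i ^ p := Finset.sum_range _
      _ ≤ ∑ i : Fin m, 2 ^ p * ‖T (e i)‖ ^ p := by
        refine Finset.sum_le_sum fun i _ => ?_
        rw [← Real.mul_rpow zero_le_two (norm_nonneg _)]
        exact Real.rpow_le_rpow (sNum_nonneg T _) (hT i) hp.le
      _ ≤ 2 ^ p * C := by
        rw [← Finset.mul_sum]
        gcongr
        exact h m e he
  · obtain ⟨m, hm⟩ := not_forall.1 hpos
    refine summable_of_ne_finset_zero (s := Finset.range m) fun k hk => ?_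
    have hzero : sNum T k = 0 := le_antisymm
      ((sNum_antitone T (by simpa using hk)).trans (not_lt.1 hm)) (sNum_nonneg T k)
    rw [hzero, Real.zero_rpow hp.ne']

end SingularNumbers

section OrthonormalENorm

variable {H G : Type*} [NormedAddCommGroup H] [InnerProductSpace ℂ H]
  [NormedAddCommGroup G] [InnerProductSpace ℂ G] {p : ℝ}

/-- The supremum of the `ℓᵖ` norms of `i ↦ ‖T (e i)‖` over finite orthonormal families `e`. For
`p ≥ 2` this is the Schatten `p`-norm, in a form that makes the triangle inequality and lower
semicontinuity immediate. -/
def orthonormalENorm (p : ℝ) (T : H →L[ℂ] G) : ℝ≥0∞ :=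
  ⨆ (m : ℕ) (e : Fin m → H) (_ : Orthonormal ℂ e), (∑ i, ‖T (e i)‖ₑ ^ p) ^ (1 / p)

lemma le_orthonormalENorm (p : ℝ) (T : H →L[ℂ] G) {m : ℕ} {e : Fin m → H}
    (he : Orthonormal ℂ e) : (∑ i, ‖T (e i)‖ₑ ^ p) ^ (1 / p) ≤ orthonormalENorm p T :=
  le_iSup_of_le m <| le_iSup_of_le e <| le_iSup_of_le he le_rfl

lemma orthonormalENorm_le {T : H →L[ℂ] G} {C : ℝ≥0∞} (h : ∀ (m : ℕ) (e : Fin m → H),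
    Orthonormal ℂ e → (∑ i, ‖T (e i)‖ₑ ^ p) ^ (1 / p) ≤ C) : orthonormalENorm p T ≤ C :=
  iSup_le fun m => iSup_le fun e => iSup_le fun he => h m e he

lemma orthonormalENorm_add_le (hp : 1 ≤ p) (S T : H →L[ℂ] G) :
    orthonormalENorm p (S + T) ≤ orthonormalENorm p S + orthonormalENorm p T := by
  refine orthonormalENorm_le fun m e he => ?_
  calc (∑ i, ‖(S + T) (e i)‖ₑ ^ p) ^ (1 / p)
      ≤ (∑ i, (‖S (e i)‖ₑ + ‖T (e i)‖ₑ) ^ p) ^ (1 / p) := by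
        gcongr with i
        exact enorm_add_le _ _
    _ ≤ (∑ i, ‖S (e i)‖ₑ ^ p) ^ (1 / p) + (∑ i, ‖T (e i)‖ₑ ^ p) ^ (1 / p) :=
        ENNReal.Lp_add_le _ _ _ hp
    _ ≤ orthonormalENorm p S + orthonormalENorm p T :=
        add_le_add (le_orthonormalENorm p S he) (le_orthonormalENorm p T he)

lemma enorm_le_orthonormalENorm (hp : 0 < p) (T : H →L[ℂ] G) : ‖T‖ₑ ≤ orthonormalENorm p T := by
  rcases eq_or_ne (orthonormalENorm p T) ⊤ with htop | htop
  · simp [htop]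
  rw [← ofReal_norm, ENNReal.ofReal_le_iff_le_toReal htop]
  refine T.opNorm_le_of_unit_norm ENNReal.toReal_nonneg fun x hx => ?_
  have hxe : Orthonormal ℂ ![x] :=
    ⟨by simpa using hx, fun i j hij => absurd (Subsingleton.elim i j) hij⟩
  have hle : ‖T x‖ₑ ≤ orthonormalENorm p T := by
    simpa [ENNReal.rpow_rpow_inv hp.ne'] using le_orthonormalENorm p T hxe
  rwa [← ofReal_norm, ENNReal.ofReal_le_iff_le_toReal htop] at hle

lemma orthonormalENorm_le_of_tendsto {ι : Type*} {l : Filter ι} [l.NeBot]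
    {S : ι → H →L[ℂ] G} {T : H →L[ℂ] G} {C : ℝ≥0∞}
    (hS : ∀ u, Tendsto (fun i => S i u) l (𝓝 (T u)))
    (hC : ∀ i, orthonormalENorm p (S i) ≤ C) : orthonormalENorm p T ≤ C := by
  refine orthonormalENorm_le fun m e he => ?_
  have hsum : Tendsto (fun i => (∑ j, ‖S i (e j)‖ₑ ^ p) ^ (1 / p)) l
      (𝓝 ((∑ j, ‖T (e j)‖ₑ ^ p) ^ (1 / p))) :=
    (tendsto_finsetSum _ fun j _ => ((hS (e j)).enorm).ennrpow_const p).ennrpow_const (1 / p)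
  exact le_of_tendsto' hsum fun i => (le_orthonormalENorm p (S i) he).trans (hC i)

lemma memSchatten_of_orthonormalENorm_ne_top [CompleteSpace G] {T : H →L[ℂ] G} (hp : 0 < p)
    (h : orthonormalENorm p T ≠ ⊤) : MemSchatten p T := by
  refine memSchatten_of_summable hp <| summable_sNum_rpow_of_sum_le hp
    (C := (orthonormalENorm p T ^ p).toReal) fun m e he => ?_
  have hle : ∑ i, ‖T (e i)‖ₑ ^ p ≤ orthonormalENorm p T ^ p := by
    rw [← ENNReal.rpow_inv_le_iff hp, ← one_div]
    exact le_orthonormalENorm p T he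
  have hreal := ENNReal.toReal_mono (ENNReal.rpow_ne_top_of_nonneg hp.le h) hle
  rw [ENNReal.toReal_sum fun i _ => ENNReal.rpow_ne_top_of_nonneg hp.le enorm_ne_top] at hreal
  simpa only [← ENNReal.toReal_rpow, toReal_enorm] using hreal

lemma orthonormalENorm_le_tsum_sub (hp : 1 ≤ p) (T : ℕ → H →L[ℂ] G) (N : ℕ) :
    orthonormalENorm p (T N) ≤
      orthonormalENorm p (T 0) + ∑' k, orthonormalENorm p (T (k + 1) - T k) := by
  suffices orthonormalENorm p (T N) ≤ orthonormalENorm p (T 0) +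
      ∑ k ∈ Finset.range N, orthonormalENorm p (T (k + 1) - T k) from
    this.trans (by gcongr; exact ENNReal.sum_le_tsum _)
  induction N with
  | zero => simp
  | succ N ih =>
    calc orthonormalENorm p (T (N + 1)) = orthonormalENorm p (T N + (T (N + 1) - T N)) := by
          rw [add_sub_cancel]
      _ ≤ orthonormalENorm p (T N) + orthonormalENorm p (T (N + 1) - T N) :=
          orthonormalENorm_add_le hp _ _
      _ ≤ _ := by
          rw [Finset.sum_range_succ, ← add_assoc]
          gcongr

lemma exists_tendsto_orthonormalENorm_ne_top [CompleteSpace G] (hp : 1 ≤ p)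
    {T : ℕ → H →L[ℂ] G} (hzero : orthonormalENorm p (T 0) ≠ ⊤)
    (hsum : ∑' k, orthonormalENorm p (T (k + 1) - T k) ≠ ⊤) :
    ∃ S : H →L[ℂ] G, Tendsto T atTop (𝓝 S) ∧ orthonormalENorm p S ≠ ⊤ := by
  have hp0 : 0 < p := zero_lt_one.trans_le hp
  have hcauchy : CauchySeq T := cauchySeq_of_edist_le_of_tsum_ne_top _ (fun k => by
    rw [edist_comm, edist_eq_enorm_sub]
    exact enorm_le_orthonormalENorm hp0 _) hsum
  obtain ⟨S, hS⟩ := cauchySeq_tendsto_of_complete hcauchy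
  refine ⟨S, hS, ne_top_of_le_ne_top (ENNReal.add_ne_top.2 ⟨hzero, hsum⟩) ?_⟩
  exact orthonormalENorm_le_of_tendsto
    (fun u => ((ContinuousLinearMap.apply ℂ G u).continuous.tendsto S).comp hS)
    (orthonormalENorm_le_tsum_sub hp T)

end OrthonormalENorm

section Multiplication

variable {X : Type*} [MeasurableSpace X] {μ : Measure X}

lemma ae_eq_mul_of_tendsto {α : X → ℂ} {F G : ℕ → Lp ℂ 2 μ} {f g : Lp ℂ 2 μ}
    (hF : Tendsto F atTop (𝓝 f)) (hG : Tendsto G atTop (𝓝 g))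
    (h : ∀ N, G N =ᵐ[μ] fun x => α x * F N x) : g =ᵐ[μ] fun x => α x * f x := by
  obtain ⟨φ, hφ, hFφ⟩ := (tendstoInMeasure_of_tendsto_Lp hF).exists_seq_tendsto_ae
  obtain ⟨ψ, hψ, hGψ⟩ :=
    (tendstoInMeasure_of_tendsto_Lp (hG.comp hφ.tendsto_atTop)).exists_seq_tendsto_ae
  filter_upwards [hFφ, hGψ, ae_all_iff.2 h] with x hFx hGx hx
  refine tendsto_nhds_unique hGx (((hFx.comp hψ.tendsto_atTop).const_mul (α x)).congr fun i => ?_)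
  exact (hx (φ (ψ i))).symm

lemma exists_clm_ae_eq_mul {H : Type*} [NormedAddCommGroup H] [NormedSpace ℂ H] [CompleteSpace H]
    {α : X → ℂ} {R : H →L[ℂ] Lp ℂ 2 μ} (h : ∀ u, MemLp (fun x => α x * R u x) 2 μ) :
    ∃ Q : H →L[ℂ] Lp ℂ 2 μ, ∀ u, Q u =ᵐ[μ] fun x => α x * R u x := by
  let Q : H →ₗ[ℂ] Lp ℂ 2 μ :=
    { toFun := fun u => (h u).toLp
      map_add' := fun u v => Lp.ext <| by
        filter_upwards [(h (u + v)).coeFn_toLp, (h u).coeFn_toLp, (h v).coeFn_toLp,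
          Lp.coeFn_add (h u).toLp (h v).toLp, Lp.coeFn_add (R u) (R v)] with x huv hu hv hQ hR
        rw [huv, hQ, Pi.add_apply, hu, hv, map_add, hR, Pi.add_apply, mul_add]
      map_smul' := fun c u => Lp.ext <| by
        filter_upwards [(h (c • u)).coeFn_toLp, (h u).coeFn_toLp, Lp.coeFn_smul c (h u).toLp,
          Lp.coeFn_smul c (R u)] with x hcu hu hQ hR
        rw [hcu, map_smul, hR, RingHom.id_apply, hQ, Pi.smul_apply, Pi.smul_apply, hu,
          mul_smul_comm] }
  have hQ (u : H) : Q u =ᵐ[μ] fun x => α x * R u x := (h u).coeFn_toLp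
  refine ⟨⟨Q, Q.continuous_of_seq_closed_graph fun u x y hu hy => ?_⟩, hQ⟩
  have hy_ae := ae_eq_mul_of_tendsto ((R.continuous.tendsto x).comp hu) hy fun N => hQ (u N)
  exact Lp.ext (hy_ae.trans (hQ x).symm)

/-- Hölder's inequality for `|α F|² = (|α|ᵖ |F|²) ^ (2 / p) (|F|²) ^ (1 - 2 / p)`. -/
lemma eLpNorm_mul_rpow_le {α F : X → ℂ} {p : ℝ} (hp : 2 ≤ p) (hα : AEStronglyMeasurable α μ)
    (hF : AEStronglyMeasurable F μ) :
    eLpNorm (fun x => α x * F x) 2 μ ^ p ≤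
      (∫⁻ x, ‖α x‖ₑ ^ p * ‖F x‖ₑ ^ (2 : ℝ) ∂μ) * eLpNorm F 2 μ ^ (p - 2) := by
  have hp0 : 0 < p := two_pos.trans_le hp
  have hp2 : 0 ≤ 1 - 2 / p := sub_nonneg.2 ((div_le_one hp0).2 hp)
  have hsq (f : X → ℂ) : eLpNorm f 2 μ = (∫⁻ x, ‖f x‖ₑ ^ (2 : ℝ) ∂μ) ^ (1 / 2 : ℝ) := by
    simp [eLpNorm_eq_lintegral_rpow_enorm_toReal two_ne_zero ENNReal.ofNat_ne_top]
  have hpoint (x : X) : ‖α x * F x‖ₑ ^ (2 : ℝ) =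
      (‖α x‖ₑ ^ p * ‖F x‖ₑ ^ (2 : ℝ)) ^ (2 / p) * (‖F x‖ₑ ^ (2 : ℝ)) ^ (1 - 2 / p) := by
    rw [enorm_mul, ENNReal.mul_rpow_of_nonneg _ _ zero_le_two,
      ENNReal.mul_rpow_of_nonneg _ _ (by positivity), mul_assoc,
      ← ENNReal.rpow_add_of_nonneg _ _ (by positivity) hp2, ← ENNReal.rpow_mul,
      mul_div_cancel₀ _ hp0.ne', add_sub_cancel, ENNReal.rpow_one]
  have hholder : ∫⁻ x, ‖α x * F x‖ₑ ^ (2 : ℝ) ∂μ ≤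
      (∫⁻ x, ‖α x‖ₑ ^ p * ‖F x‖ₑ ^ (2 : ℝ) ∂μ) ^ (2 / p) *
        (∫⁻ x, ‖F x‖ₑ ^ (2 : ℝ) ∂μ) ^ (1 - 2 / p) := by
    simp_rw [hpoint]
    exact ENNReal.lintegral_mul_norm_pow_le ((hα.enorm.pow_const p).mul (hF.enorm.pow_const 2))
      (hF.enorm.pow_const 2) (by positivity) hp2 (by ring)
  calc eLpNorm (fun x => α x * F x) 2 μ ^ p
      = (∫⁻ x, ‖α x * F x‖ₑ ^ (2 : ℝ) ∂μ) ^ (p / 2) := by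
        rw [hsq, ← ENNReal.rpow_mul]
        congr 1
        ring
    _ ≤ _ := ENNReal.rpow_le_rpow hholder (by positivity)
    _ = _ := by
        rw [ENNReal.mul_rpow_of_nonneg _ _ (by positivity), ← ENNReal.rpow_mul, ← ENNReal.rpow_mul,
          hsq F, ← ENNReal.rpow_mul, show 2 / p * (p / 2) = 1 by field_simp, ENNReal.rpow_one,
          show (1 - 2 / p) * (p / 2) = 1 / 2 * (p - 2) by field_simp]

lemma lintegral_enorm_rpow_eq_eLpNorm_rpow {α : X → ℂ} {p : ℝ} (hp : 0 < p) :
    ∫⁻ x, ‖α x‖ₑ ^ p ∂μ = eLpNorm α (ENNReal.ofReal p) μ ^ p := by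
  rw [eLpNorm_eq_lintegral_rpow_enorm_toReal (by simpa using hp) ENNReal.ofReal_ne_top,
    ENNReal.toReal_ofReal hp.le, one_div, ENNReal.rpow_inv_rpow hp.ne']

end Multiplication

section Carleman

variable {X : Type*} [MeasurableSpace X] {μ : Measure X} {α : X → ℂ} {p : ℝ}
  {H : Type*} [NormedAddCommGroup H] [InnerProductSpace ℂ H]

/-- `R` is a Carleman operator: `R u x = ⟪k x, u⟫` for a kernel `k : X → H`, which is required
to satisfy `‖k x‖² ≤ κ`. -/
def HasCarlemanBound (κ : ℝ≥0∞) (R : H →L[ℂ] Lp ℂ 2 μ) : Prop :=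
  ∃ k : X → H, (∀ x, ‖k x‖ₑ ^ 2 ≤ κ) ∧ ∀ u, R u =ᵐ[μ] fun x => inner ℂ (k x) u

lemma HasCarlemanBound.comp [CompleteSpace H] {K : Type*} [NormedAddCommGroup K]
    [InnerProductSpace ℂ K] [CompleteSpace K] {κ : ℝ≥0∞} {R : H →L[ℂ] Lp ℂ 2 μ}
    (h : HasCarlemanBound κ R) (S : K →L[ℂ] H) : HasCarlemanBound (‖S‖ₑ ^ 2 * κ) (R ∘L S) := by
  obtain ⟨k, hk, hR⟩ := h
  refine ⟨fun x => S.adjoint (k x), fun x => ?_, fun u => ?_⟩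
  · calc ‖S.adjoint (k x)‖ₑ ^ 2 ≤ (‖S.adjoint‖ₑ * ‖k x‖ₑ) ^ 2 := by
          gcongr
          exact S.adjoint.le_opENorm (k x)
      _ ≤ ‖S‖ₑ ^ 2 * κ := by
          rw [mul_pow, enorm_eq_iff_norm_eq.2 (LinearIsometryEquiv.norm_map _ S)]
          gcongr
          exact hk x
  · filter_upwards [hR (S u)] with x hx
    rw [S.adjoint_inner_left, ← hx, ContinuousLinearMap.comp_apply]

lemma HasCarlemanBound.sum_enorm_sq_le {κ : ℝ≥0∞} {R : H →L[ℂ] Lp ℂ 2 μ}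
    (h : HasCarlemanBound κ R) {m : ℕ} {e : Fin m → H} (he : Orthonormal ℂ e) :
    ∀ᵐ x ∂μ, ∑ i, ‖R (e i) x‖ₑ ^ (2 : ℝ) ≤ κ := by
  obtain ⟨k, hk, hR⟩ := h
  filter_upwards [ae_all_iff.2 fun i => hR (e i)] with x hx
  have hbessel : ∑ i, ‖inner ℂ (e i) (k x)‖ₑ ^ 2 ≤ ‖k x‖ₑ ^ 2 := by
    simp_rw [← ofReal_norm, ← ENNReal.ofReal_pow (norm_nonneg _)]
    rw [← ENNReal.ofReal_sum_of_nonneg fun i _ => sq_nonneg _]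
    exact ENNReal.ofReal_le_ofReal (he.sum_inner_products_le (k x))
  refine (le_of_eq ?_).trans (hbessel.trans (hk x))
  refine Finset.sum_congr rfl fun i _ => ?_
  rw [hx i, ENNReal.rpow_two, enorm_eq_iff_norm_eq.2 (norm_inner_symm (k x) (e i))]

lemma HasCarlemanBound.memLp_mul {κ : ℝ≥0∞} (hκ : κ ≠ ⊤) {R : H →L[ℂ] Lp ℂ 2 μ}
    (h : HasCarlemanBound κ R) (hp : 2 ≤ p) (hα : MemLp α (ENNReal.ofReal p) μ) (u : H) :
    MemLp (fun x => α x * R u x) 2 μ := by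
  have hp0 : 0 < p := two_pos.trans_le hp
  obtain ⟨k, hk, hR⟩ := h
  have hRu : ∀ᵐ x ∂μ, ‖R u x‖ₑ ^ (2 : ℝ) ≤ κ * ‖u‖ₑ ^ 2 := by
    filter_upwards [hR u] with x hx
    rw [hx, ENNReal.rpow_two]
    calc ‖inner ℂ (k x) u‖ₑ ^ 2 ≤ (‖k x‖ₑ * ‖u‖ₑ) ^ 2 := by
          gcongr
          simp_rw [← ofReal_norm, ← ENNReal.ofReal_mul (norm_nonneg _)]
          exact ENNReal.ofReal_le_ofReal (norm_inner_le_norm _ _)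
      _ ≤ κ * ‖u‖ₑ ^ 2 := by
          rw [mul_pow]
          gcongr
          exact hk x
  have hint : ∫⁻ x, ‖α x‖ₑ ^ p * ‖R u x‖ₑ ^ (2 : ℝ) ∂μ < ⊤ :=
    calc ∫⁻ x, ‖α x‖ₑ ^ p * ‖R u x‖ₑ ^ (2 : ℝ) ∂μ
        ≤ ∫⁻ x, ‖α x‖ₑ ^ p * (κ * ‖u‖ₑ ^ 2) ∂μ :=
          lintegral_mono_ae (hRu.mono fun x hx => by gcongr)
      _ = eLpNorm α (ENNReal.ofReal p) μ ^ p * (κ * ‖u‖ₑ ^ 2) := by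
          rw [lintegral_mul_const' _ _ (by finiteness), lintegral_enorm_rpow_eq_eLpNorm_rpow hp0]
      _ < ⊤ := by
          have := hα.2.ne
          finiteness
  refine ⟨hα.1.mul (Lp.aestronglyMeasurable _), (ENNReal.rpow_lt_top_iff_of_pos hp0).1 ?_⟩
  exact (eLpNorm_mul_rpow_le hp hα.1 (Lp.aestronglyMeasurable _)).trans_lt <|
    ENNReal.mul_lt_top hint (ENNReal.rpow_lt_top_of_nonneg (sub_nonneg.2 hp) (Lp.eLpNorm_ne_top _))

/- Hölder distributes the exponent `p` as `2 + (p - 2)`: Bessel's inequality for the kernel controls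
the first factor, the operator norm of `R` the second. -/
lemma HasCarlemanBound.sum_enorm_mul_rpow_le {κ : ℝ≥0∞} {R Q : H →L[ℂ] Lp ℂ 2 μ}
    (h : HasCarlemanBound κ R) (hp : 2 ≤ p) (hα : AEStronglyMeasurable α μ)
    (hQ : ∀ u, Q u =ᵐ[μ] fun x => α x * R u x) {m : ℕ} {e : Fin m → H} (he : Orthonormal ℂ e) :
    ∑ i, ‖Q (e i)‖ₑ ^ p ≤ eLpNorm α (ENNReal.ofReal p) μ ^ p * κ * ‖R‖ₑ ^ (p - 2) := by
  have hR (i : Fin m) : AEStronglyMeasurable (R (e i)) μ := Lp.aestronglyMeasurable _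
  have hRe (i : Fin m) : ‖R (e i)‖ₑ ≤ ‖R‖ₑ := by
    simpa [← ofReal_norm, he.1 i] using R.le_opENorm (e i)
  calc ∑ i, ‖Q (e i)‖ₑ ^ p
      ≤ ∑ i, (∫⁻ x, ‖α x‖ₑ ^ p * ‖R (e i) x‖ₑ ^ (2 : ℝ) ∂μ) * ‖R‖ₑ ^ (p - 2) := by
        refine Finset.sum_le_sum fun i _ => ?_
        rw [Lp.enorm_def, eLpNorm_congr_ae (hQ (e i))]
        refine (eLpNorm_mul_rpow_le hp hα (hR i)).trans ?_
        rw [← Lp.enorm_def]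
        gcongr
        exact hRe i
    _ = (∫⁻ x, ‖α x‖ₑ ^ p * ∑ i, ‖R (e i) x‖ₑ ^ (2 : ℝ) ∂μ) * ‖R‖ₑ ^ (p - 2) := by
        simp_rw [← Finset.sum_mul, Finset.mul_sum]
        rw [← lintegral_finsetSum']
        exact fun i _ => (hα.enorm.pow_const p).mul ((hR i).enorm.pow_const 2)
    _ ≤ (∫⁻ x, ‖α x‖ₑ ^ p * κ ∂μ) * ‖R‖ₑ ^ (p - 2) := by
        gcongr ?_ * _
        exact lintegral_mono_ae ((h.sum_enorm_sq_le he).mono fun x hx => by gcongr)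
    _ = eLpNorm α (ENNReal.ofReal p) μ ^ p * κ * ‖R‖ₑ ^ (p - 2) := by
        rw [lintegral_mul_const'' _ (hα.enorm.pow_const p),
          lintegral_enorm_rpow_eq_eLpNorm_rpow (two_pos.trans_le hp)]

lemma HasCarlemanBound.orthonormalENorm_mul_comp_le [CompleteSpace H] {K : Type*}
    [NormedAddCommGroup K] [InnerProductSpace ℂ K] [CompleteSpace K] {κ : ℝ≥0∞}
    {R Q : H →L[ℂ] Lp ℂ 2 μ} (h : HasCarlemanBound κ R) (hR : ‖R‖ ≤ 1) (hp : 2 ≤ p)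
    (hα : AEStronglyMeasurable α μ) (hQ : ∀ u, Q u =ᵐ[μ] fun x => α x * R u x) (S : K →L[ℂ] H) :
    orthonormalENorm p (Q ∘L S) ≤
      eLpNorm α (ENNReal.ofReal p) μ * κ ^ (1 / p) * ‖S‖ₑ := by
  have hp0 : 0 < p := two_pos.trans_le hp
  have hRS : ‖R ∘L S‖ₑ ≤ ‖S‖ₑ := by
    simp_rw [← ofReal_norm]
    exact ENNReal.ofReal_le_ofReal <| (R.opNorm_comp_le S).trans <|
      mul_le_of_le_one_left (norm_nonneg S) hR
  refine orthonormalENorm_le fun m e he => ?_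
  rw [one_div, ENNReal.rpow_inv_le_iff hp0]
  calc ∑ i, ‖(Q ∘L S) (e i)‖ₑ ^ p
      ≤ eLpNorm α (ENNReal.ofReal p) μ ^ p * (‖S‖ₑ ^ 2 * κ) * ‖R ∘L S‖ₑ ^ (p - 2) :=
        (h.comp S).sum_enorm_mul_rpow_le hp hα (fun u => hQ (S u)) he
    _ ≤ eLpNorm α (ENNReal.ofReal p) μ ^ p * (‖S‖ₑ ^ (2 : ℝ) * κ) * ‖S‖ₑ ^ (p - 2) := by
        rw [ENNReal.rpow_two]
        gcongr
    _ = eLpNorm α (ENNReal.ofReal p) μ ^ p * κ * (‖S‖ₑ ^ (2 : ℝ) * ‖S‖ₑ ^ (p - 2)) := by ring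
    _ = (eLpNorm α (ENNReal.ofReal p) μ * κ ^ p⁻¹ * ‖S‖ₑ) ^ p := by
        rw [← ENNReal.rpow_add_of_nonneg _ _ zero_le_two (sub_nonneg.2 hp), add_sub_cancel,
          ENNReal.mul_rpow_of_nonneg _ _ hp0.le, ENNReal.mul_rpow_of_nonneg _ _ hp0.le,
          ENNReal.rpow_inv_rpow hp0.ne']

end Carleman

section Approximation

lemma tendsto_apply_apply_of_norm_le_one {𝕜 E : Type*} [NontriviallyNormedField 𝕜]
    [SeminormedAddCommGroup E] [NormedSpace 𝕜 E] {M : ℕ → E →L[𝕜] E} (hM : ∀ k, ‖M k‖ ≤ 1) {f : E}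
    (hf : Tendsto (fun k => M k f) atTop (𝓝 f)) :
    Tendsto (fun k => M k (M k f)) atTop (𝓝 f) := by
  have hbound (k : ℕ) : ‖M k (M k f) - f‖ ≤ 2 * ‖M k f - f‖ := by
    have hcontr := (M k).le_of_opNorm_le (hM k) (M k f - f)
    have htriangle := norm_sub_le_norm_sub_add_norm_sub (M k (M k f)) (M k f) f
    rw [map_sub] at hcontr
    linarith
  rw [tendsto_iff_norm_sub_tendsto_zero]
  refine squeeze_zero (fun _ => norm_nonneg _) hbound ?_
  simpa using (tendsto_iff_norm_sub_tendsto_zero.1 hf).const_mul 2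

variable {X : Type*} [MeasurableSpace X] {μ : Measure X}
  {K : Type*} [NormedAddCommGroup K] [InnerProductSpace ℂ K] [CompleteSpace K]
  {M : ℕ → Lp ℂ 2 μ →L[ℂ] Lp ℂ 2 μ} {κ : ℕ → ℝ≥0∞} {K₀ : K →L[ℂ] Lp ℂ 2 μ} {α : X → ℂ} {p : ℝ}

/- With `D k = (M (k + 1) - M k) K₀`, the operators `α M_k M_k K₀` telescope as
`α M_{k+1} M_{k+1} K₀ - α M_k M_k K₀ = α M_{k+1} D_k + α M_k D_k`: each summand retains one factor
`M`, which makes it Schatten, and one difference, which makes it small. -/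
lemma exists_tendsto_mul_comp_comp {Q : ℕ → Lp ℂ 2 μ →L[ℂ] Lp ℂ 2 μ} (hM : ∀ k, ‖M k‖ ≤ 1)
    (hcomm : ∀ k f, M (k + 1) (M k f) = M k (M (k + 1) f))
    (hκ : κ 0 ≠ ⊤) (hcarleman : ∀ k, HasCarlemanBound (κ k) (M k))
    (hsum : ∑' k, (κ (k + 1) ^ (1 / p) + κ k ^ (1 / p)) * ‖(M (k + 1) - M k) ∘L K₀‖ₑ ≠ ⊤)
    (hp : 2 ≤ p) (hα : MemLp α (ENNReal.ofReal p) μ)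
    (hQ : ∀ k f, Q k f =ᵐ[μ] fun x => α x * M k f x) :
    ∃ S : K →L[ℂ] Lp ℂ 2 μ,
      Tendsto (fun k => Q k ∘L M k ∘L K₀) atTop (𝓝 S) ∧ orthonormalENorm p S ≠ ⊤ := by
  have hp1 : 1 ≤ p := one_le_two.trans hp
  have hα_top := hα.2.ne
  have hQ_le (k : ℕ) (S : K →L[ℂ] Lp ℂ 2 μ) : orthonormalENorm p (Q k ∘L S) ≤
      eLpNorm α (ENNReal.ofReal p) μ * κ k ^ (1 / p) * ‖S‖ₑ :=
    (hcarleman k).orthonormalENorm_mul_comp_le (hM k) hp hα.1 (hQ k) S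
  have hQM_comm (k : ℕ) (f : Lp ℂ 2 μ) : Q (k + 1) (M k f) = Q k (M (k + 1) f) := by
    refine Lp.ext ((hQ (k + 1) (M k f)).trans ?_)
    rw [hcomm]
    exact (hQ k (M (k + 1) f)).symm
  have hstep (k : ℕ) : Q (k + 1) ∘L M (k + 1) ∘L K₀ - Q k ∘L M k ∘L K₀ =
      Q (k + 1) ∘L (M (k + 1) - M k) ∘L K₀ + Q k ∘L (M (k + 1) - M k) ∘L K₀ := by
    ext1 u
    simp [hQM_comm]
  have hstep_le (k : ℕ) :
      orthonormalENorm p (Q (k + 1) ∘L M (k + 1) ∘L K₀ - Q k ∘L M k ∘L K₀) ≤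
        eLpNorm α (ENNReal.ofReal p) μ *
          ((κ (k + 1) ^ (1 / p) + κ k ^ (1 / p)) * ‖(M (k + 1) - M k) ∘L K₀‖ₑ) := by
    rw [hstep]
    exact (orthonormalENorm_add_le hp1 _ _).trans <|
      (add_le_add (hQ_le _ _) (hQ_le _ _)).trans_eq (by ring)
  refine exists_tendsto_orthonormalENorm_ne_top hp1 ?_ ?_
  · exact ne_top_of_le_ne_top (by finiteness) (hQ_le 0 _)
  · refine ne_top_of_le_ne_top ?_ (ENNReal.tsum_le_tsum hstep_le)
    rw [ENNReal.tsum_mul_left]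
    finiteness

theorem memSchatten_mul_of_carleman_approx (hM : ∀ k, ‖M k‖ ≤ 1)
    (hcomm : ∀ k f, M (k + 1) (M k f) = M k (M (k + 1) f))
    (hκ : ∀ k, κ k ≠ ⊤) (hcarleman : ∀ k, HasCarlemanBound (κ k) (M k))
    (hlim : ∀ u, Tendsto (fun k => M k (K₀ u)) atTop (𝓝 (K₀ u)))
    (hsum : ∑' k, (κ (k + 1) ^ (1 / p) + κ k ^ (1 / p)) * ‖(M (k + 1) - M k) ∘L K₀‖ₑ ≠ ⊤)
    (hp : 2 ≤ p) (hα : MemLp α (ENNReal.ofReal p) μ) {T : K →L[ℂ] Lp ℂ 2 μ}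
    (hT : ∀ u, T u =ᵐ[μ] fun x => α x * K₀ u x) : MemSchatten p T := by
  choose Q hQ using fun k => exists_clm_ae_eq_mul ((hcarleman k).memLp_mul (hκ k) hp hα)
  obtain ⟨S, hS, hS_top⟩ :=
    exists_tendsto_mul_comp_comp hM hcomm (hκ 0) hcarleman hsum hp hα hQ
  have hTS : T = S := by
    ext1 u
    have hSu : Tendsto (fun k => Q k (M k (K₀ u))) atTop (𝓝 (S u)) :=
      ((ContinuousLinearMap.apply ℂ (Lp ℂ 2 μ) u).continuous.tendsto S).comp hS
    exact Lp.ext ((hT u).trans (ae_eq_mul_of_tendsto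
      (tendsto_apply_apply_of_norm_le_one hM (hlim u)) hSu fun k => hQ k (M k (K₀ u))).symm)
  exact hTS ▸ memSchatten_of_orthonormalENorm_ne_top (two_pos.trans_le hp) hS_top

end Approximation

section Translation

variable {G : Type*} [AddCommGroup G] [MeasurableSpace G] [MeasurableAdd G] {μ : Measure G}
  [μ.IsAddLeftInvariant]

/-- The translation `f ↦ f (z + ·)` as an isometry of `L²(μ)`, for a left invariant measure `μ`. -/
def translate (z : G) : Lp ℂ 2 μ →ₗᵢ[ℂ] Lp ℂ 2 μ :=
  Lp.compMeasurePreservingₗᵢ ℂ (fun x => z + x) (measurePreserving_add_left μ z)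

lemma translate_ae_eq (z : G) (f : Lp ℂ 2 μ) : translate z f =ᵐ[μ] fun x => f (z + x) :=
  Lp.coeFn_compMeasurePreserving _ _

lemma translate_zero (f : Lp ℂ 2 μ) : translate 0 f = f := by
  refine Lp.ext ((translate_ae_eq 0 f).trans (Eventually.of_forall fun x => ?_))
  simp only [zero_add]

lemma translate_add (z w : G) (f : Lp ℂ 2 μ) :
    translate (z + w) f = translate z (translate w f) := by
  have hw :=
    (measurePreserving_add_left μ z).quasiMeasurePreserving.ae_eq_comp (translate_ae_eq w f)
  refine Lp.ext ?_
  filter_upwards [translate_ae_eq z (translate w f), translate_ae_eq (z + w) f, hw] with x h₁ h₂ h₃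
  rw [h₁, h₂, ← Function.comp_apply (f := translate w f) (g := fun x => z + x), h₃,
    Function.comp_apply, ← add_assoc, add_comm w]

lemma translate_comm (z w : G) (f : Lp ℂ 2 μ) :
    translate z (translate w f) = translate w (translate z f) := by
  rw [← translate_add, add_comm, translate_add]

end Translation

section TranslateAverage

lemma integrable_prod_comp_add {G E : Type*} [AddGroup G] [MeasurableSpace G] [MeasurableAdd₂ G]
    {μ ν : Measure G} [SFinite μ] [μ.IsAddLeftInvariant] [IsFiniteMeasure ν]
    [NormedAddCommGroup E] {f : G → E} (hf : MemLp f 2 μ) {s : Set G} (hs : μ s ≠ ⊤) :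
    Integrable (fun q : G × G => f (q.1 + q.2)) (ν.prod (μ.restrict s)) := by
  have : IsFiniteMeasure (μ.restrict s) := isFiniteMeasure_restrict.2 hs
  have hprod : MemLp (fun q : G × G => f (q.1 + q.2)) 2 (ν.prod μ) :=
    (hf.comp_snd ν).comp_measurePreserving (measurePreserving_prod_add ν μ)
  exact (hprod.mono_measure (Measure.prod_mono le_rfl Measure.restrict_le_self)).integrable
    one_le_two

variable {G : Type*} [AddCommGroup G] [TopologicalSpace G] [IsTopologicalAddGroup G]
  [LocallyCompactSpace G] [SecondCountableTopology G] [MeasurableSpace G] [BorelSpace G]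
  {μ : Measure G} [μ.IsAddHaarMeasure]

lemma continuous_translate (f : Lp ℂ 2 μ) : Continuous fun z => translate z f := by
  have : Fact ((2 : ℝ≥0∞) ≠ ⊤) := ⟨by simp⟩
  change Continuous fun z : G => DomAddAct.mk z +ᵥ f
  fun_prop

lemma integrable_translate (ν : Measure G) [IsFiniteMeasure ν] (f : Lp ℂ 2 μ) :
    Integrable (fun z => translate z f) ν :=
  .of_bound (continuous_translate f).aestronglyMeasurable ‖f‖ (.of_forall fun z => by simp)

/-- The average of the translates of `f ∈ L²(μ)` over a probability measure `ν`, that is, the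
convolution of `f` with the reflection of `ν`. The zero measure is admitted as `ν`, so that balls of
every radius can be averaged over. -/
def translateAverage (μ : Measure G) [μ.IsAddHaarMeasure] (ν : Measure G)
    [IsZeroOrProbabilityMeasure ν] :
    Lp ℂ 2 μ →L[ℂ] Lp ℂ 2 μ :=
  LinearMap.mkContinuous
    { toFun := fun f => ∫ z, translate z f ∂ν
      map_add' := fun f g => by
        simp only [map_add]
        exact integral_add (integrable_translate ν f) (integrable_translate ν g)
      map_smul' := fun c f => by
        simp only [map_smul, RingHom.id_apply]
        exact integral_smul c _ } 1 fun f => by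
    refine (norm_integral_le_of_norm_le_const (.of_forall fun z =>
      (LinearIsometry.norm_map (translate z) f).le)).trans ?_
    rw [mul_comm]
    gcongr
    exact measureReal_le_one

variable {ν ν' : Measure G} [IsZeroOrProbabilityMeasure ν] [IsZeroOrProbabilityMeasure ν']

lemma translateAverage_apply (f : Lp ℂ 2 μ) :
    translateAverage μ ν f = ∫ z, translate z f ∂ν := rfl

lemma norm_translateAverage_le : ‖translateAverage μ ν‖ ≤ 1 :=
  LinearMap.mkContinuous_norm_le _ zero_le_one _

lemma translateAverage_translate (z : G) (f : Lp ℂ 2 μ) :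
    translateAverage μ ν (translate z f) = translate z (translateAverage μ ν f) := by
  simp only [translateAverage_apply, translate_comm _ z]
  exact (translate z).toContinuousLinearMap.integral_comp_comm (integrable_translate ν f)

lemma translateAverage_comm (f : Lp ℂ 2 μ) :
    translateAverage μ ν (translateAverage μ ν' f) =
      translateAverage μ ν' (translateAverage μ ν f) := by
  rw [translateAverage_apply (ν := ν') f,
    ← (translateAverage μ ν).integral_comp_comm (integrable_translate ν' f)]
  simp only [translateAverage_translate, translateAverage_apply (ν := ν')]

lemma translateAverage_ae_eq (f : Lp ℂ 2 μ) :
    translateAverage μ ν f =ᵐ[μ] fun x => ∫ z, f (z + x) ∂ν := by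
  refine ae_eq_of_forall_setIntegral_eq_of_sigmaFinite (fun s _ hs => ?_) (fun s _ hs => ?_)
    fun s hs hs_lt => ?_
  · exact integrableOn_Lp_of_measure_ne_top _ (by norm_num) hs.ne
  · exact (integrable_prod_comp_add (Lp.memLp f) hs.ne).integral_prod_right
  · calc ∫ x in s, translateAverage μ ν f x ∂μ
        = inner ℂ (indicatorConstLp 2 hs hs_lt.ne (1 : ℂ)) (translateAverage μ ν f) :=
          (L2.inner_indicatorConstLp_one hs hs_lt.ne _).symm
      _ = ∫ z, ∫ x in s, translate z f x ∂μ ∂ν := by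
          rw [translateAverage_apply, ← integral_inner (integrable_translate ν f)]
          simp only [L2.inner_indicatorConstLp_one]
      _ = ∫ z, ∫ x in s, f (z + x) ∂μ ∂ν := integral_congr_ae <| .of_forall fun z =>
          integral_congr_ae (ae_restrict_of_ae (translate_ae_eq z f))
      _ = ∫ x in s, ∫ z, f (z + x) ∂ν ∂μ :=
          integral_integral_swap (integrable_prod_comp_add (Lp.memLp f) hs_lt.ne)

lemma hasCarlemanBound_translateAverage_cond {s : Set G} (hs : MeasurableSet s) (hs_ne : μ s ≠ ⊤) :
    HasCarlemanBound (μ s)⁻¹ (translateAverage μ (ProbabilityTheory.cond μ s)) := by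
  have hpre (x : G) : MeasurableSet ((fun y => -x + y) ⁻¹' s) := measurable_const_add _ hs
  have hμ (x : G) : μ ((fun y => -x + y) ⁻¹' s) = μ s := measure_preimage_add μ (-x) s
  refine ⟨fun x => indicatorConstLp 2 (hpre x) ((hμ x).trans_ne hs_ne) ((μ.real s)⁻¹ : ℂ),
    fun x => ?_, fun f => ?_⟩
  · obtain hs_zero | hs_zero := eq_or_ne (μ s) 0
    · simp [hs_zero]
    have hs_pos : 0 < μ.real s := ENNReal.toReal_pos hs_zero hs_ne
    have hnorm : ‖((μ.real s)⁻¹ : ℂ)‖ₑ = (μ s)⁻¹ := by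
      rw [← ofReal_norm, norm_inv, Complex.norm_real, Real.norm_of_nonneg measureReal_nonneg,
        ENNReal.ofReal_inv_of_pos hs_pos, ofReal_measureReal hs_ne]
    calc _ ≤ ((μ s)⁻¹ * μ s ^ (1 / (2 : ℝ≥0∞).toReal)) ^ 2 := by
          gcongr
          simpa only [hμ, hnorm] using enorm_indicatorConstLp_le (c := ((μ.real s)⁻¹ : ℂ))
            (hs := hpre x) (hμs := (hμ x).trans_ne hs_ne) (p := 2)
      _ = (μ s)⁻¹ * ((μ s)⁻¹ * μ s) := by
          rw [mul_pow, ← ENNReal.rpow_natCast (_ ^ _), ← ENNReal.rpow_mul]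
          norm_num [sq, mul_assoc]
      _ = (μ s)⁻¹ := by rw [ENNReal.inv_mul_cancel hs_zero hs_ne, mul_one]
  · filter_upwards [translateAverage_ae_eq (ν := ProbabilityTheory.cond μ s) f] with x hx
    have hshift : ∫ z in s, f (z + x) ∂μ = ∫ y in (fun y => -x + y) ⁻¹' s, f y ∂μ := by
      have := (measurePreserving_add_left μ x).setIntegral_preimage_emb
        (measurableEmbedding_addLeft x) f ((fun y => -x + y) ⁻¹' s)
      simpa [← Set.preimage_comp, Function.comp_def, add_comm] using this
    rw [hx, L2.inner_indicatorConstLp_eq_inner_setIntegral, ProbabilityTheory.cond,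
      integral_smul_measure, hshift]
    simp [Measure.real, mul_comm]

end TranslateAverage

section Rate

lemma exists_opNorm_le_mul_of_pointwise {𝕜 E F ι : Type*} [RCLike 𝕜] [NormedAddCommGroup E]
    [NormedSpace 𝕜 E] [CompleteSpace E] [NormedAddCommGroup F] [NormedSpace 𝕜 F]
    {A : ι → E →L[𝕜] F} {w : ι → ℝ} (hw : ∀ i, 0 < w i)
    (hA : ∀ x, ∃ C, ∀ i, ‖A i x‖ ≤ C * w i) : ∃ C, ∀ i, ‖A i‖ ≤ C * w i := by
  have hnorm (i : ι) : ‖((w i)⁻¹ : 𝕜)‖ = (w i)⁻¹ := by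
    rw [norm_inv, RCLike.norm_ofReal, abs_of_pos (hw i)]
  obtain ⟨C, hC⟩ := banach_steinhaus (g := fun i => ((w i)⁻¹ : 𝕜) • A i) fun x => by
    obtain ⟨C, hC⟩ := hA x
    refine ⟨C, fun i => ?_⟩
    rw [smul_apply, norm_smul, hnorm, inv_mul_le_iff₀ (hw i), mul_comm]
    exact hC i
  refine ⟨C, fun i => ?_⟩
  rw [mul_comm, ← inv_mul_le_iff₀ (hw i), ← hnorm i, ← norm_smul]
  exact hC i

lemma tendsto_of_norm_sub_le_mul_pow {E : Type*} [SeminormedAddCommGroup E] {f : ℕ → E} {a : E}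
    {C σ : ℝ} (hσ : 0 ≤ σ) (hσ1 : σ < 1) (h : ∀ k, ‖f k - a‖ ≤ C * σ ^ k) :
    Tendsto f atTop (𝓝 a) := by
  rw [tendsto_iff_norm_sub_tendsto_zero]
  refine squeeze_zero (fun _ => norm_nonneg _) h ?_
  simpa using (tendsto_pow_atTop_nhds_zero_of_lt_one hσ hσ1).const_mul C

section Geometric

variable {X : Type*} [MeasurableSpace X] {μ : Measure X}
  {K : Type*} [NormedAddCommGroup K] [InnerProductSpace ℂ K] [CompleteSpace K]
  {M : ℕ → Lp ℂ 2 μ →L[ℂ] Lp ℂ 2 μ} {κ : ℕ → ℝ≥0∞} {K₀ : K →L[ℂ] Lp ℂ 2 μ} {α : X → ℂ}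
  {p c ρ σ : ℝ}

theorem memSchatten_mul_of_geometric_approx (hM : ∀ k, ‖M k‖ ≤ 1)
    (hcomm : ∀ k f, M (k + 1) (M k f) = M k (M (k + 1) f))
    (hcarleman : ∀ k, HasCarlemanBound (κ k) (M k))
    (hκ : ∀ k, κ k ^ (1 / p) ≤ ENNReal.ofReal (c * ρ ^ k))
    (happrox : ∀ u, ∃ C, ∀ k, ‖M k (K₀ u) - K₀ u‖ ≤ C * σ ^ k)
    (hc : 0 ≤ c) (hρ : 0 ≤ ρ) (hσ : 0 < σ) (hσ1 : σ < 1) (hρσ : ρ * σ < 1)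
    (hp : 2 ≤ p) (hα : MemLp α (ENNReal.ofReal p) μ) {T : K →L[ℂ] Lp ℂ 2 μ}
    (hT : ∀ u, T u =ᵐ[μ] fun x => α x * K₀ u x) : MemSchatten p T := by
  obtain ⟨C, hC⟩ : ∃ C, ∀ k, ‖M k ∘L K₀ - K₀‖ ≤ C * σ ^ k :=
    exists_opNorm_le_mul_of_pointwise (fun k => pow_pos hσ k) happrox
  have hC0 : 0 ≤ C := by simpa using (norm_nonneg _).trans (hC 0)
  have hdiff (k : ℕ) : ‖(M (k + 1) - M k) ∘L K₀‖ ≤ 2 * C * σ ^ k := by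
    have hpow : C * σ ^ (k + 1) ≤ C * σ ^ k := by
      gcongr ?_ * ?_
      exact pow_le_pow_of_le_one hσ.le hσ1.le k.le_succ
    have htriangle := norm_sub_le (M (k + 1) ∘L K₀ - K₀) (M k ∘L K₀ - K₀)
    rw [sub_sub_sub_cancel_right, ← ContinuousLinearMap.sub_comp] at htriangle
    linarith [hC k, hC (k + 1)]
  have hterm (k : ℕ) : (κ (k + 1) ^ (1 / p) + κ k ^ (1 / p)) * ‖(M (k + 1) - M k) ∘L K₀‖ₑ ≤
      ENNReal.ofReal (c * (ρ + 1) * (2 * C) * (ρ * σ) ^ k) := by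
    calc _ ≤ (ENNReal.ofReal (c * ρ ^ (k + 1)) + ENNReal.ofReal (c * ρ ^ k)) *
          ENNReal.ofReal (2 * C * σ ^ k) := by
          gcongr
          · exact hκ (k + 1)
          · exact hκ k
          · rw [← ofReal_norm]
            exact ENNReal.ofReal_le_ofReal (hdiff k)
      _ = _ := by
          rw [← ENNReal.ofReal_add (by positivity) (by positivity),
            ← ENNReal.ofReal_mul (by positivity)]
          ring_nf
  refine memSchatten_mul_of_carleman_approx hM hcomm (fun k hk => ?_) hcarleman (fun u => ?_)
    (ne_top_of_le_ne_top ?_ (ENNReal.tsum_le_tsum hterm)) hp hα hT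
  · have h := hκ k
    rw [hk, ENNReal.top_rpow_of_pos (by positivity)] at h
    exact ENNReal.ofReal_ne_top (top_le_iff.1 h)
  · obtain ⟨C, hC⟩ := happrox u
    exact tendsto_of_norm_sub_le_mul_pow hσ.le hσ1 hC
  · exact ((summable_geometric_of_lt_one (by positivity) hρσ).mul_left _).tsum_ofReal_ne_top

end Geometric

section BallAverage

variable {E : Type*} [NormedAddCommGroup E] [NormedSpace ℝ E] [FiniteDimensional ℝ E]
  [MeasurableSpace E] [BorelSpace E] {μ : Measure E} [μ.IsAddHaarMeasure]

/-- The average over the ball of radius `h`: `f ↦ ⨍ z in ball 0 h, f (z + ·)`. -/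
def ballAverage (μ : Measure E) [μ.IsAddHaarMeasure] (h : ℝ) : Lp ℂ 2 μ →L[ℂ] Lp ℂ 2 μ :=
  translateAverage μ (ProbabilityTheory.cond μ (Metric.ball 0 h))

open Module in
lemma addHaar_ball_inv_rpow_inv_two_pow {q : ℝ} (hq : 0 ≤ q) (k : ℕ) :
    (μ (Metric.ball (0 : E) ((1 / 2) ^ k)))⁻¹ ^ q =
      ENNReal.ofReal ((μ.real (Metric.ball (0 : E) 1))⁻¹ ^ q * (2 ^ (finrank ℝ E * q)) ^ k) := by
  have hball : 0 < μ.real (Metric.ball (0 : E) 1) :=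
    ENNReal.toReal_pos (Metric.measure_ball_pos μ _ one_pos).ne' measure_ball_lt_top.ne
  rw [Measure.addHaar_ball_of_pos μ _ (by positivity), ← ofReal_measureReal measure_ball_lt_top.ne,
    ← ENNReal.ofReal_mul (by positivity), ← ENNReal.ofReal_inv_of_pos (by positivity),
    ENNReal.ofReal_rpow_of_nonneg (by positivity) hq, mul_comm, mul_inv,
    Real.mul_rpow (by positivity) (by positivity), Real.rpow_natCast_mul two_pos.le,
    Real.rpow_pow_comm (by positivity)]
  simp [pow_right_comm]

open Module in
theorem memSchatten_mul_of_norm_ballAverage_sub_le {K : Type*} [NormedAddCommGroup K]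
    [InnerProductSpace ℂ K] [CompleteSpace K] {K₀ : K →L[ℂ] Lp ℂ 2 μ} {α : E → ℂ} {p s : ℝ}
    (happrox : ∀ u, ∃ C, ∀ h > 0, ‖ballAverage μ h (K₀ u) - K₀ u‖ ≤ C * h ^ s)
    (hs : finrank ℝ E < p * s) (hp : 2 ≤ p) (hα : MemLp α (ENNReal.ofReal p) μ)
    {T : K →L[ℂ] Lp ℂ 2 μ} (hT : ∀ u, T u =ᵐ[μ] fun x => α x * K₀ u x) : MemSchatten p T := by
  have hp0 : 0 < p := two_pos.trans_le hp
  have hs0 : 0 < s := pos_of_mul_pos_right ((Nat.cast_nonneg _).trans_lt hs) hp0.le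
  refine memSchatten_mul_of_geometric_approx (M := fun k => ballAverage μ ((1 / 2) ^ k))
    (c := (μ.real (Metric.ball (0 : E) 1))⁻¹ ^ (1 / p)) (ρ := 2 ^ (finrank ℝ E * (1 / p)))
    (σ := (1 / 2) ^ s)
    (fun k => norm_translateAverage_le) (fun k => translateAverage_comm)
    (fun k => hasCarlemanBound_translateAverage_cond measurableSet_ball measure_ball_lt_top.ne)
    (fun k => (addHaar_ball_inv_rpow_inv_two_pow (by positivity) k).le) (fun u => ?_)
    (by positivity) (by positivity) (by positivity)
    (Real.rpow_lt_one (by norm_num) (by norm_num) hs0) ?_ hp hα hT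
  · obtain ⟨C, hC⟩ := happrox u
    refine ⟨C, fun k => ?_⟩
    rw [Real.rpow_pow_comm one_half_pos.le]
    exact hC ((1 / 2) ^ k) (by positivity)
  · rw [one_div 2, Real.inv_rpow two_pos.le, ← Real.rpow_neg two_pos.le, ← Real.rpow_add two_pos]
    refine Real.rpow_lt_one_of_one_lt_of_neg one_lt_two ?_
    rw [mul_one_div, ← sub_eq_add_neg, sub_neg, div_lt_iff₀ hp0]
    linarith

end BallAverage

end Rate

section BallMean

open Module ProbabilityTheory

lemma ae_norm_le_cond_ball {E : Type*} [SeminormedAddCommGroup E] [MeasurableSpace E]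
    [OpensMeasurableSpace E] {μ : Measure E} (h : ℝ) :
    ∀ᵐ z ∂cond μ (Metric.ball 0 h), ‖z‖ ≤ h :=
  (ae_cond_mem measurableSet_ball).mono fun _ hz => (mem_ball_zero_iff.1 hz).le

lemma lintegral_sq_cond_ball_le {E : Type*} [NormedAddCommGroup E] [MeasurableSpace E]
    [OpensMeasurableSpace E] {μ : Measure E} {ω : E → ℝ≥0∞} (hω0 : ω 0 = 0) {e : ℝ} (he : 0 ≤ e)
    {r : ℝ} (hr : 0 < r) :
    ∫⁻ z, ω z ^ 2 ∂cond μ (Metric.ball 0 r) ≤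
      (μ (Metric.ball 0 r))⁻¹ * (ENNReal.ofReal r ^ e * ∫⁻ w, ω w ^ 2 / ‖w‖ₑ ^ e ∂μ) := by
  have hpoint (z : E) (hz : z ∈ Metric.ball 0 r) :
      ω z ^ 2 ≤ ENNReal.ofReal r ^ e * (ω z ^ 2 / ‖z‖ₑ ^ e) := by
    obtain rfl | hz0 := eq_or_ne z 0
    · simp [hω0]
    have hzr : ‖z‖ₑ ≤ ENNReal.ofReal r := by
      rw [← ofReal_norm]
      exact ENNReal.ofReal_le_ofReal (mem_ball_zero_iff.1 hz).le
    calc ω z ^ 2 = ‖z‖ₑ ^ e * (ω z ^ 2 / ‖z‖ₑ ^ e) :=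
          (ENNReal.mul_div_cancel (by simp [hz0]) (by simp [he])).symm
      _ ≤ ENNReal.ofReal r ^ e * (ω z ^ 2 / ‖z‖ₑ ^ e) := by gcongr
  rw [ProbabilityTheory.cond, lintegral_smul_measure, smul_eq_mul,
    ← lintegral_const_mul' (ENNReal.ofReal r ^ e) _ (by finiteness)]
  refine mul_le_mul_right ?_ _
  exact (setLIntegral_mono' measurableSet_ball hpoint).trans (setLIntegral_le_lintegral _ _)

variable {E : Type*} [NormedAddCommGroup E] [NormedSpace ℝ E] [FiniteDimensional ℝ E]
  [MeasurableSpace E] {μ : Measure E} [μ.IsAddHaarMeasure]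

lemma isProbabilityMeasure_cond_ball {x : E} {r : ℝ} (hr : 0 < r) :
    IsProbabilityMeasure (cond μ (Metric.ball x r)) :=
  cond_isProbabilityMeasure_of_finite (Metric.measure_ball_pos μ x hr).ne' measure_ball_lt_top.ne

variable [BorelSpace E]

lemma map_smul_cond_ball {s : ℝ} (hs : s ≠ 0) (h : ℝ) :
    (cond μ (Metric.ball 0 h)).map (fun z : E => s • z) = cond μ (Metric.ball 0 (|s| * h)) := by
  have hball : (fun z : E => s • z) ⁻¹' Metric.ball 0 (|s| * h) = Metric.ball 0 h := by
    ext z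
    simp [norm_smul, hs]
  have hscale : ENNReal.ofReal |(s ^ finrank ℝ E)⁻¹| ≠ 0 := by simp [hs]
  ext A hA
  rw [Measure.map_apply (measurable_const_smul s) hA, cond_apply measurableSet_ball,
    cond_apply measurableSet_ball, ← hball, ← Set.preimage_inter,
    Measure.addHaar_preimage_smul μ hs, Measure.addHaar_preimage_smul μ hs,
    ENNReal.mul_inv (.inl hscale) (.inl ENNReal.ofReal_ne_top), mul_mul_mul_comm,
    ENNReal.inv_mul_cancel hscale ENNReal.ofReal_ne_top, one_mul]

lemma integral_clm_cond_ball_eq_zero {V : Type*} [NormedAddCommGroup V] [NormedSpace ℝ V]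
    (D : E →L[ℝ] V) (h : ℝ) : ∫ z, D z ∂cond μ (Metric.ball 0 h) = 0 := by
  have : (cond μ (Metric.ball (0 : E) h)).IsNegInvariant :=
    ⟨by simpa [Measure.neg] using map_smul_cond_ball (E := E) (neg_ne_zero.2 one_ne_zero) h⟩
  have : IsAddTorsionFree V := .of_isTorsionFree ℝ V
  rw [← self_eq_neg, ← integral_neg, ← integral_neg_eq_self]
  simp

variable {ω : E → ℝ≥0∞} {θ : ℝ}

lemma lintegral_cond_ball_le (hω : Measurable ω) (hω0 : ω 0 = 0) (hθ : 0 ≤ θ) {r : ℝ}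
    (hr : 0 < r) :
    ∫⁻ z, ω z ∂cond μ (Metric.ball 0 r) ≤
      ((μ (Metric.ball 0 1))⁻¹ * ∫⁻ w, ω w ^ 2 / ‖w‖ₑ ^ (finrank ℝ E + 2 * θ) ∂μ) ^ (1 / 2 : ℝ) *
        ENNReal.ofReal r ^ θ := by
  have := isProbabilityMeasure_cond_ball (μ := μ) (x := 0) hr
  have hr0 : ENNReal.ofReal r ≠ 0 := by simpa using hr
  have hscale : (μ (Metric.ball 0 r))⁻¹ * ENNReal.ofReal r ^ (finrank ℝ E + 2 * θ) =
      (μ (Metric.ball 0 1))⁻¹ * ENNReal.ofReal r ^ (2 * θ) := by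
    have hball : μ (Metric.ball 0 r) =
        ENNReal.ofReal r ^ (finrank ℝ E : ℝ) * μ (Metric.ball 0 1) := by
      rw [Measure.addHaar_ball_of_pos μ _ hr, ENNReal.ofReal_pow hr.le, ENNReal.rpow_natCast]
    have hpow : ENNReal.ofReal r ^ (finrank ℝ E : ℝ) ≠ 0 := by simp [hr]
    have hpow_top : ENNReal.ofReal r ^ (finrank ℝ E : ℝ) ≠ ⊤ := by simp
    rw [hball, ENNReal.rpow_add _ _ hr0 ENNReal.ofReal_ne_top,
      ENNReal.mul_inv (.inl hpow) (.inl hpow_top), mul_mul_mul_comm,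
      ENNReal.inv_mul_cancel hpow hpow_top, one_mul]
  have hjensen : ∫⁻ z, ω z ∂cond μ (Metric.ball 0 r) ≤
      (∫⁻ z, ω z ^ 2 ∂cond μ (Metric.ball 0 r)) ^ (1 / 2 : ℝ) := by
    simpa [eLpNorm_eq_lintegral_rpow_enorm_toReal] using eLpNorm_le_eLpNorm_of_exponent_le
      (one_le_two (α := ℝ≥0∞)) hω.aestronglyMeasurable (μ := cond μ (Metric.ball 0 r))
  refine hjensen.trans ?_
  calc _ ≤ ((μ (Metric.ball 0 r))⁻¹ * (ENNReal.ofReal r ^ (finrank ℝ E + 2 * θ) *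
          ∫⁻ w, ω w ^ 2 / ‖w‖ₑ ^ (finrank ℝ E + 2 * θ) ∂μ)) ^ (1 / 2 : ℝ) := by
        gcongr
        exact lintegral_sq_cond_ball_le hω0 (by positivity) hr
    _ = ((μ (Metric.ball 0 1))⁻¹ * (∫⁻ w, ω w ^ 2 / ‖w‖ₑ ^ (finrank ℝ E + 2 * θ) ∂μ) *
          ENNReal.ofReal r ^ (2 * θ)) ^ (1 / 2 : ℝ) := by
        rw [← mul_assoc, hscale, mul_right_comm]
    _ = _ := by
        rw [ENNReal.mul_rpow_of_nonneg _ _ one_half_pos.le, ← ENNReal.rpow_mul]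
        congr 2
        ring

lemma lintegral_lintegral_smul_cond_ball_le (hω : Measurable ω) (hω0 : ω 0 = 0) (hθ : 0 ≤ θ) {h : ℝ}
    (hh : 0 < h) :
    ∫⁻ z, (∫⁻ s in Set.Ioc (0 : ℝ) 1, ω (s • z)) ∂cond μ (Metric.ball 0 h) ≤
      ((μ (Metric.ball 0 1))⁻¹ * ∫⁻ w, ω w ^ 2 / ‖w‖ₑ ^ (finrank ℝ E + 2 * θ) ∂μ) ^ (1 / 2 : ℝ) *
        ENNReal.ofReal h ^ θ := by
  have hmeas : Measurable fun q : E × ℝ => ω (q.2 • q.1) :=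
    hω.comp (measurable_snd.smul measurable_fst)
  have hslice (s : ℝ) (hs : s ∈ Set.Ioc (0 : ℝ) 1) :
      ∫⁻ z, ω (s • z) ∂cond μ (Metric.ball 0 h) ≤
        ((μ (Metric.ball 0 1))⁻¹ * ∫⁻ w, ω w ^ 2 / ‖w‖ₑ ^ (finrank ℝ E + 2 * θ) ∂μ) ^ (1 / 2 : ℝ) *
          ENNReal.ofReal h ^ θ := by
    rw [← lintegral_map hω (measurable_const_smul s), map_smul_cond_ball hs.1.ne', abs_of_pos hs.1]
    refine (lintegral_cond_ball_le hω hω0 hθ (mul_pos hs.1 hh)).trans ?_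
    gcongr
    exact mul_le_of_le_one_left hh.le hs.2
  rw [lintegral_lintegral_swap hmeas.aemeasurable]
  refine (setLIntegral_mono' measurableSet_Ioc hslice).trans_eq ?_
  simp

lemma enorm_translate_sub_sub_le {F : Lp ℂ 2 μ} {D : E →L[ℝ] Lp ℂ 2 μ}
    (hD : ∀ z, translate z F - F = ∫ s in (0 : ℝ)..1, translate (s • z) (D z))
    (hω : ∀ w z, ‖translate w (D z) - D z‖ₑ ≤ ω w * ‖z‖ₑ) (z : E) :
    ‖translate z F - F - D z‖ₑ ≤ (∫⁻ s in Set.Ioc (0 : ℝ) 1, ω (s • z)) * ‖z‖ₑ := by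
  have hcont : Continuous fun s : ℝ => translate (s • z) (D z) :=
    (continuous_translate (D z)).comp (by fun_prop)
  have hremainder : translate z F - F - D z =
      ∫ s in Set.Ioc (0 : ℝ) 1, (translate (s • z) (D z) - D z) := by
    rw [← intervalIntegral.integral_of_le zero_le_one, intervalIntegral.integral_sub
      (hcont.intervalIntegrable _ _) intervalIntegrable_const, ← hD z]
    simp
  rw [hremainder, ← lintegral_mul_const' _ _ enorm_ne_top]
  exact (enorm_integral_le_lintegral_enorm _).trans (lintegral_mono fun s => hω (s • z) z)

lemma ballAverage_sub_eq_integral (F : Lp ℂ 2 μ) (D : E →L[ℝ] Lp ℂ 2 μ) {h : ℝ} (hh : 0 < h) :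
    ballAverage μ h F - F = ∫ z, (translate z F - F - D z) ∂cond μ (Metric.ball 0 h) := by
  have := isProbabilityMeasure_cond_ball (μ := μ) (x := 0) hh
  have hintD : Integrable D (cond μ (Metric.ball 0 h)) :=
    .of_bound D.continuous.aestronglyMeasurable (‖D‖ * h)
      ((ae_norm_le_cond_ball h).mono fun z hz => D.le_opNorm_of_le hz)
  have hintF := integrable_translate (cond μ (Metric.ball 0 h)) F
  rw [integral_sub (hintF.sub' (integrable_const F)) hintD, integral_clm_cond_ball_eq_zero,
    integral_sub hintF (integrable_const F)]
  simp [ballAverage, translateAverage_apply]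

theorem exists_norm_ballAverage_sub_le_of_enorm_translate_sub_le {F : Lp ℂ 2 μ}
    {D : E →L[ℝ] Lp ℂ 2 μ}
    (hD : ∀ z, translate z F - F = ∫ s in (0 : ℝ)..1, translate (s • z) (D z))
    (hω : ∀ w z, ‖translate w (D z) - D z‖ₑ ≤ ω w * ‖z‖ₑ) (hω_meas : Measurable ω)
    (hω0 : ω 0 = 0) (hθ : 0 ≤ θ)
    (hω_int : ∫⁻ w, ω w ^ 2 / ‖w‖ₑ ^ (finrank ℝ E + 2 * θ) ∂μ ≠ ⊤) :
    ∃ C, ∀ h > 0, ‖ballAverage μ h F - F‖ ≤ C * h ^ (1 + θ) := by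
  set J := ((μ (Metric.ball 0 1))⁻¹ *
    ∫⁻ w, ω w ^ 2 / ‖w‖ₑ ^ (finrank ℝ E + 2 * θ) ∂μ) ^ (1 / 2 : ℝ)
  have hJ : J ≠ ⊤ := by
    have := (Metric.measure_ball_pos μ (0 : E) one_pos).ne'
    finiteness
  refine ⟨J.toReal, fun h hh => ?_⟩
  have hmain : ‖ballAverage μ h F - F‖ₑ ≤ ENNReal.ofReal (J.toReal * h ^ (1 + θ)) := by
    calc _ ≤ ∫⁻ z, ‖translate z F - F - D z‖ₑ ∂cond μ (Metric.ball 0 h) :=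
          ballAverage_sub_eq_integral F D hh ▸ enorm_integral_le_lintegral_enorm _
      _ ≤ ∫⁻ z, (∫⁻ s in Set.Ioc (0 : ℝ) 1, ω (s • z)) * ENNReal.ofReal h
            ∂cond μ (Metric.ball 0 h) := by
          refine lintegral_mono_ae ((ae_norm_le_cond_ball h).mono fun z hz => ?_)
          refine (enorm_translate_sub_sub_le hD hω z).trans (mul_le_mul_right ?_ _)
          rw [← ofReal_norm]
          exact ENNReal.ofReal_le_ofReal hz
      _ ≤ J * ENNReal.ofReal h ^ θ * ENNReal.ofReal h := by
          rw [lintegral_mul_const' _ _ ENNReal.ofReal_ne_top]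
          gcongr
          exact lintegral_lintegral_smul_cond_ball_le hω_meas hω0 hθ hh
      _ = _ := by
          rw [ENNReal.ofReal_mul ENNReal.toReal_nonneg, ENNReal.ofReal_toReal hJ,
            ENNReal.ofReal_rpow_of_pos hh, mul_assoc, ← ENNReal.ofReal_mul (by positivity),
            add_comm, Real.rpow_add_one hh.ne']
  rw [← ofReal_norm] at hmain
  exact (ENNReal.ofReal_le_ofReal_iff (by positivity)).1 hmain

end BallMean

section WeakDerivative

variable {n : ℕ} {φ : Bdy n → ℝ}

lemma IsTestB.memLp (hφ : IsTestB n φ) : MemLp (fun x => (φ x : ℂ)) 2 (volume : Measure (Bdy n)) :=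
  (Complex.continuous_ofReal.comp hφ.1.continuous).memLp_of_hasCompactSupport
    (hφ.2.comp_left Complex.ofReal_zero)

/-- A test function as an element of `L²(ℝⁿ)`. -/
def IsTestB.toLp (hφ : IsTestB n φ) : Hbd n := hφ.memLp.toLp _

lemma IsTestB.inner_toLp (hφ : IsTestB n φ) (F : Hbd n) :
    inner ℂ hφ.toLp F = ∫ x, F x * (φ x : ℂ) := by
  rw [L2.inner_def]
  refine integral_congr_ae (hφ.memLp.coeFn_toLp.mono fun x hx => ?_)
  simp [IsTestB.toLp, hx]

lemma eq_of_forall_inner_test {F G : Hbd n}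
    (h : ∀ φ (hφ : IsTestB n φ), (inner ℂ hφ.toLp F : ℂ) = inner ℂ hφ.toLp G) : F = G := by
  refine Lp.ext (ae_eq_of_integral_contDiff_smul_eq
    ((Lp.memLp F).locallyIntegrable one_le_two) ((Lp.memLp G).locallyIntegrable one_le_two)
    fun φ hφ hφ_supp => ?_)
  have hφ_test : IsTestB n φ := ⟨hφ, hφ_supp⟩
  have hinner := h φ hφ_test
  rw [IsTestB.inner_toLp, IsTestB.inner_toLp] at hinner
  simpa [mul_comm] using hinner

lemma IsTestB.comp_sub_right (hφ : IsTestB n φ) (z : Bdy n) : IsTestB n fun x => φ (x - z) :=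
  ⟨hφ.1.comp (contDiff_id.sub contDiff_const), hφ.2.comp_homeomorph (Homeomorph.subRight z)⟩

lemma IsTestB.inner_toLp_translate (hφ : IsTestB n φ) (z : Bdy n) (F : Hbd n) :
    (inner ℂ hφ.toLp (translate z F) : ℂ) = inner ℂ (hφ.comp_sub_right z).toLp F := by
  rw [IsTestB.inner_toLp, IsTestB.inner_toLp,
    ← integral_add_left_eq_self (fun x => F x * _) z]
  exact integral_congr_ae ((translate_ae_eq z F).mono fun x hx => by simp [hx])

lemma IsWeakDerivB.hasDerivAt_inner_translate {z : Bdy n} {F G : Hbd n}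
    (hFG : IsWeakDerivB n z F G) (hφ : IsTestB n φ) (s : ℝ) :
    HasDerivAt (fun s : ℝ => (inner ℂ hφ.toLp (translate (s • z) F) : ℂ))
      (inner ℂ hφ.toLp (translate (s • z) G)) s := by
  have hsupp : HasCompactSupport fun x => φ (-x) := hφ.2.comp_homeomorph (Homeomorph.neg _)
  have hcont : ContDiff ℝ 1 fun x => φ (-x) := (hφ.1.comp contDiff_neg).of_le (by simp)
  have hF := (Lp.memLp F).locallyIntegrable one_le_two
  have hfderiv (x : Bdy n) : fderiv ℝ (fun y => φ (-y)) x z = -fderiv ℝ φ (-x) z := by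
    simpa using DFunLike.congr_fun (fderiv_comp_smul (f := φ) (x := x) (-1 : ℝ)) z
  have hconv (w : Bdy n) : (inner ℂ hφ.toLp (translate w F) : ℂ) =
      convolution F (fun x => φ (-x)) (ContinuousLinearMap.lsmul ℝ ℝ).flip volume w := by
    rw [hφ.inner_toLp_translate, IsTestB.inner_toLp]
    exact integral_congr_ae (.of_forall fun x => by simp [mul_comm])
  have hderiv := (hsupp.hasFDerivAt_convolution_right (ContinuousLinearMap.lsmul ℝ ℝ).flip hF
    hcont (s • z)).comp_hasDerivAt s ((hasDerivAt_id s).smul_const z)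
  simp only [hconv]
  refine hderiv.congr_deriv ?_
  rw [one_smul, convolution_precompR_apply _ hF (hsupp.fderiv ℝ)
    (hcont.continuous_fderiv one_ne_zero), hφ.inner_toLp_translate, IsTestB.inner_toLp,
    ← neg_eq_iff_eq_neg.2 (hFG _ (hφ.comp_sub_right (s • z))), ← integral_neg]
  refine integral_congr_ae (.of_forall fun x => ?_)
  simp [hfderiv, fderiv_comp_sub, mul_comm]

lemma IsWeakDerivB.translate_sub {z : Bdy n} {F G : Hbd n} (hFG : IsWeakDerivB n z F G) :
    translate z F - F = ∫ s in (0 : ℝ)..1, translate (s • z) G := by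
  have hcont : Continuous fun s : ℝ => translate (s • z) G :=
    (continuous_translate G).comp (by fun_prop)
  refine eq_of_forall_inner_test fun φ hφ => ?_
  have hpair : Continuous fun s : ℝ => (inner ℂ hφ.toLp (translate (s • z) G) : ℂ) := by
    fun_prop
  calc (inner ℂ hφ.toLp (translate z F - F) : ℂ)
      = ∫ s in (0 : ℝ)..1, (inner ℂ hφ.toLp (translate (s • z) G) : ℂ) := by
        rw [intervalIntegral.integral_eq_sub_of_hasDerivAt
          (fun s _ => hFG.hasDerivAt_inner_translate hφ s) (hpair.intervalIntegrable _ _)]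
        simp [inner_sub_right, translate_zero]
    _ = inner ℂ hφ.toLp (∫ s in (0 : ℝ)..1, translate (s • z) G) :=
        (innerSL ℂ hφ.toLp).intervalIntegral_comp_comm (hcont.intervalIntegrable _ _)

end WeakDerivative

section Gradient

variable {n : ℕ}

lemma IsWeakDerivB.congr {v : Bdy n} {f f' g g' : Bdy n → ℂ} (h : IsWeakDerivB n v f g)
    (hf : f =ᵐ[volume] f') (hg : g =ᵐ[volume] g') : IsWeakDerivB n v f' g' := fun φ hφ => by
  calc ∫ y, f' y * (fderiv ℝ φ y v : ℂ)
      = ∫ y, f y * (fderiv ℝ φ y v : ℂ) := integral_congr_ae (hf.symm.mul (ae_eq_refl _))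
    _ = -∫ y, g y * (φ y : ℂ) := h φ hφ
    _ = -∫ y, g' y * (φ y : ℂ) := congrArg Neg.neg (integral_congr_ae (hg.mul (ae_eq_refl _)))

lemma IsTestB.integrable_mul {φ : Bdy n → ℝ} (hφ : IsTestB n φ) (F : Hbd n) :
    Integrable fun x => F x * (φ x : ℂ) :=
  (Lp.memLp F).integrable_mul hφ.memLp

lemma IsTestB.fderiv_apply {φ : Bdy n → ℝ} (hφ : IsTestB n φ) (v : Bdy n) :
    IsTestB n fun x => fderiv ℝ φ x v :=
  ⟨(hφ.1.fderiv_right (by simp)).clm_apply contDiff_const,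
    (hφ.2.fderiv ℝ).comp_left (g := fun L : Bdy n →L[ℝ] ℝ => L v) rfl⟩

lemma IsWeakDerivB.sum_smul {ι : Type*} [Fintype ι] {v : ι → Bdy n} {F : Hbd n} {G : ι → Hbd n}
    (hG : ∀ i, IsWeakDerivB n (v i) F (G i)) (c : ι → ℝ) :
    IsWeakDerivB n (∑ i, c i • v i) F (∑ i, c i • G i : Hbd n) := fun φ hφ => by
  calc ∫ y, F y * (fderiv ℝ φ y (∑ i, c i • v i) : ℂ)
      = ∫ y, ∑ i, c i • (F y * (fderiv ℝ φ y (v i) : ℂ)) := by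
        simp [Finset.mul_sum, mul_left_comm]
    _ = ∑ i, c i • ∫ y, F y * (fderiv ℝ φ y (v i) : ℂ) := by
        simp_rw [← integral_smul]
        exact integral_finsetSum _ fun i _ => ((hφ.fderiv_apply (v i)).integrable_mul F).smul (c i)
    _ = -∑ i, c i • inner ℂ hφ.toLp (G i) := by
        simp only [hG _ φ hφ, hφ.inner_toLp, smul_neg, Finset.sum_neg_distrib]
    _ = -inner ℂ hφ.toLp (∑ i, c i • G i) := by simp only [inner_sum, inner_smul_right_eq_smul]
    _ = -∫ y, (∑ i, c i • G i : Hbd n) y * (φ y : ℂ) := by rw [hφ.inner_toLp]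

/-- The differential `z ↦ ∑ i, z i • G i` of a function with partial derivatives `G i`. -/
def differential (G : Fin n → Hbd n) : Bdy n →L[ℝ] Hbd n :=
  ∑ i, (EuclideanSpace.proj i : Bdy n →L[ℝ] ℝ).smulRight (G i)

lemma differential_apply (G : Fin n → Hbd n) (z : Bdy n) : differential G z = ∑ i, z i • G i := by
  simp [differential]

lemma isWeakDerivB_differential {F : Hbd n} {G : Fin n → Hbd n}
    (hG : ∀ i, IsWeakDerivB n (bdirs n i) F (G i)) (z : Bdy n) :
    IsWeakDerivB n z F (differential G z) := by
  have hz : z = ∑ i, z i • bdirs n i := by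
    ext j
    simp [bdirs, Pi.single_apply]
  rw [differential_apply]
  convert IsWeakDerivB.sum_smul hG z

lemma enorm_translate_differential_sub_le (G : Fin n → Hbd n) (w z : Bdy n) :
    ‖translate w (differential G z) - differential G z‖ₑ ≤
      (∑ i, ‖translate w (G i) - G i‖ₑ) * ‖z‖ₑ := by
  have hdiff : translate w (differential G z) - differential G z =
      ∑ i, z i • (translate w (G i) - G i) := by
    simp [differential_apply, smul_sub, map_real_smul (translate w) (translate w).continuous]
  rw [hdiff, Finset.sum_mul]
  refine (enorm_sum_le _ _).trans (Finset.sum_le_sum fun i _ => ?_)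
  rw [enorm_smul, mul_comm]
  refine mul_le_mul_right ?_ _
  exact enorm_le_iff_norm_le.2 (PiLp.norm_apply_le z i)

end Gradient

section Gagliardo

lemma enorm_sq_eq_lintegral {X : Type*} [MeasurableSpace X] {μ : Measure X} (f : Lp ℂ 2 μ) :
    ‖f‖ₑ ^ 2 = ∫⁻ x, ‖f x‖ₑ ^ 2 ∂μ := by
  simpa [Lp.enorm_def] using (lintegral_enorm_rpow_eq_eLpNorm_rpow (α := f) (μ := μ) two_pos).symm

lemma lintegral_enorm_translate_sub_sq_div {E : Type*} [NormedAddCommGroup E]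
    [MeasurableSpace E] [BorelSpace E] [SecondCountableTopology E] {μ : Measure E} [SFinite μ]
    [μ.IsAddLeftInvariant] (e : ℝ) (G : Lp ℂ 2 μ) :
    ∫⁻ w, ‖translate w G - G‖ₑ ^ 2 / ‖w‖ₑ ^ e ∂μ =
      ∫⁻ q, ‖G q.1 - G q.2‖ₑ ^ 2 / ‖q.1 - q.2‖ₑ ^ e ∂μ.prod μ := by
  have : Measurable G := (Lp.stronglyMeasurable G).measurable
  have hslice (w : E) :
      ‖translate w G - G‖ₑ ^ 2 / ‖w‖ₑ ^ e = ∫⁻ y, ‖G (w + y) - G y‖ₑ ^ 2 / ‖w‖ₑ ^ e ∂μ := by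
    have hsub : ⇑(translate w G - G) =ᵐ[μ] fun y => G (w + y) - G y :=
      (Lp.coeFn_sub _ _).trans ((translate_ae_eq w G).sub (ae_eq_refl _))
    simp_rw [div_eq_mul_inv]
    rw [lintegral_mul_const _ (by fun_prop), enorm_sq_eq_lintegral]
    congr 1
    exact lintegral_congr_ae (hsub.fun_comp fun a => ‖a‖ₑ ^ 2)
  simp only [hslice]
  rw [← (measurePreserving_add_prod μ μ).lintegral_comp (by fun_prop),
    lintegral_prod _ (by fun_prop)]
  simp

lemma lintegral_sum_sq_div_ne_top {X ι : Type*} [MeasurableSpace X] {μ : Measure X} [Fintype ι]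
    {a : ι → X → ℝ≥0∞} {b : X → ℝ≥0∞} (ha : ∀ i, Measurable (a i)) (hb : Measurable b)
    (h : ∀ i, ∫⁻ x, a i x ^ 2 / b x ∂μ ≠ ⊤) : ∫⁻ x, (∑ i, a i x) ^ 2 / b x ∂μ ≠ ⊤ := by
  have hpoint (x : X) : (∑ i, a i x) ^ 2 / b x ≤ Fintype.card ι * ∑ i, a i x ^ 2 / b x := by
    have hsq : (∑ i, a i x) ^ 2 ≤ Fintype.card ι * ∑ i, a i x ^ 2 := by
      simpa [(by norm_num : (2 : ℝ) - 1 = 1)] using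
        ENNReal.rpow_sum_le_const_mul_sum_rpow Finset.univ (fun i => a i x) one_le_two
    simp_rw [div_eq_mul_inv, ← Finset.sum_mul, ← mul_assoc]
    gcongr
  refine ne_top_of_le_ne_top ?_ (lintegral_mono hpoint)
  rw [lintegral_const_mul' _ _ (ENNReal.natCast_ne_top _), lintegral_finsetSum _ (by fun_prop)]
  have := ENNReal.sum_ne_top.2 fun i (_ : i ∈ Finset.univ) => h i
  finiteness

variable {n : ℕ}

lemma GagB.lintegral_enorm_sub_sq_div_ne_top {g : Bdy n → ℂ} (hg : GagB n g) :
    ∫⁻ q : Bdy n × Bdy n, ‖g q.1 - g q.2‖ₑ ^ 2 / ‖q.1 - q.2‖ₑ ^ ((n : ℝ) + 1) ≠ ⊤ := by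
  refine ne_top_of_le_ne_top hg.2.ne (lintegral_mono fun q => ?_)
  obtain hq | hq := eq_or_ne q.1 q.2
  · simp [hq]
  · have hdist : 0 < ‖q.1 - q.2‖ := norm_pos_iff.2 (sub_ne_zero.2 hq)
    rw [Real.enorm_of_nonneg (by positivity), ENNReal.ofReal_div_of_pos (by positivity),
      ENNReal.ofReal_pow (norm_nonneg _), ← ENNReal.ofReal_rpow_of_pos hdist, ofReal_norm,
      ofReal_norm]

lemma GagB.lintegral_enorm_translate_sub_sq_div_ne_top {g : Bdy n → ℂ} (hg : GagB n g) {G : Hbd n}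
    (hG : G =ᵐ[volume] g) :
    ∫⁻ w, ‖translate w G - G‖ₑ ^ 2 / ‖w‖ₑ ^ ((n : ℝ) + 1) ≠ ⊤ := by
  have hpair : ∀ᵐ q : Bdy n × Bdy n, G q.1 - G q.2 = g q.1 - g q.2 :=
    (Measure.quasiMeasurePreserving_fst.ae_eq_comp hG).sub
      (Measure.quasiMeasurePreserving_snd.ae_eq_comp hG)
  rw [lintegral_enorm_translate_sub_sq_div, ← Measure.volume_eq_prod,
    lintegral_congr_ae (hpair.mono fun q hq => congrArg (‖·‖ₑ ^ 2 / _) hq)]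
  exact hg.lintegral_enorm_sub_sq_div_ne_top

theorem MemH32B.exists_norm_ballAverage_sub_le {f : Bdy n → ℂ} (hf : MemH32B n f) {F : Hbd n}
    (hF : F =ᵐ[volume] f) : ∃ C, ∀ h > 0, ‖ballAverage volume h F - F‖ ≤ C * h ^ (3 / 2 : ℝ) := by
  obtain ⟨-, hderiv⟩ := hf
  choose g hg hg_memLp hg_gag using hderiv
  set G : Fin n → Hbd n := fun i => (hg_memLp i).toLp (g i)
  have hG (i : Fin n) : G i =ᵐ[volume] g i := (hg_memLp i).coeFn_toLp
  have hweak := isWeakDerivB_differential fun i => (hg i).congr hF.symm (hG i).symm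
  set ω : Bdy n → ℝ≥0∞ := fun w => ∑ i, ‖translate w (G i) - G i‖ₑ
  have hmeas (i : Fin n) : Measurable fun w => ‖translate w (G i) - G i‖ₑ :=
    ((continuous_translate (G i)).sub continuous_const).enorm.measurable
  have hω_meas : Measurable ω := Finset.measurable_fun_sum _ fun i _ => hmeas i
  have hω_int : ∫⁻ w, ω w ^ 2 / ‖w‖ₑ ^ (Module.finrank ℝ (Bdy n) + 2 * (1 / 2 : ℝ)) ≠ ⊤ := by
    have (i : Fin n) := (hg_gag i).lintegral_enorm_translate_sub_sq_div_ne_top (hG i)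
    refine lintegral_sum_sq_div_ne_top (fun i => hmeas i) (by fun_prop) fun i => ?_
    simpa using this i
  have htaylor := exists_norm_ballAverage_sub_le_of_enorm_translate_sub_le
    (fun z => (hweak z).translate_sub) (enorm_translate_differential_sub_le G) hω_meas
    (by simp [translate_zero]) one_half_pos.le hω_int
  norm_num at htaylor ⊢
  exact htaylor

end Gagliardo

theorem statement7_general (n : ℕ) (K : Type*) [NormedAddCommGroup K] [InnerProductSpace ℂ K]
    [CompleteSpace K] (K₀ : K →L[ℂ] Hbd n)
    (hran : ∀ u : K, ∃ f : Bdy n → ℂ, ⇑(K₀ u) =ᵐ[(volume : Measure (Bdy n))] f ∧ MemH32B n f)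
    (α : Bdy n → ℂ) (p : ℝ) (hp2 : 2 ≤ p) (hpn : 2 * (n : ℝ) / 3 < p)
    (hαp : MemLp α (ENNReal.ofReal p) (volume : Measure (Bdy n)))
    (T : K →L[ℂ] Hbd n)
    (hT : ∀ u : K, ⇑(T u) =ᵐ[(volume : Measure (Bdy n))] fun y => α y * (K₀ u) y) :
    MemSchatten p T := by
  have happrox (u : K) :
      ∃ C, ∀ h > 0, ‖ballAverage volume h (K₀ u) - K₀ u‖ ≤ C * h ^ (3 / 2 : ℝ) :=
    have ⟨_, hf, hf_mem⟩ := hran u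
    hf_mem.exists_norm_ballAverage_sub_le hf
  have hdim : (Module.finrank ℝ (Bdy n) : ℝ) < p * (3 / 2) := by
    rw [finrank_euclideanSpace_fin]
    linarith
  exact memSchatten_mul_of_norm_ballAverage_sub_le happrox hdim hp2 hαp hT

theorem statement7 (n : ℕ) (hn : 1 ≤ n) (K : Type) [NormedAddCommGroup K]
    [InnerProductSpace ℂ K] [CompleteSpace K] (K₀ : K →L[ℂ] Hbd n)
    (hran : ∀ u : K, ∃ f : Bdy n → ℂ, ⇑(K₀ u) =ᵐ[(volume : Measure (Bdy n))] f ∧ MemH32B n f)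
    (α : Bdy n → ℂ) (hα : MemLp α ⊤ (volume : Measure (Bdy n)))
    (p : ℝ) (hp2 : 2 ≤ p) (hpn : 2 * (n : ℝ) / 3 < p)
    (hαp : MemLp α (ENNReal.ofReal p) (volume : Measure (Bdy n)))
    (T : K →L[ℂ] Hbd n)
    (hT : ∀ u : K, ⇑(T u) =ᵐ[(volume : Measure (Bdy n))] fun y => α y * (K₀ u) y) :
    MemSchatten p T :=
  statement7_general n K K₀ hran α p hp2 hpn hαp T hT

end RobinHS
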